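/- Fix an integer m ≥ 3 and a ∈ ℂ^{m−1}. Then the set of eigenvalues of H(m,a) is infinite, and it is a discrete subset of ℂ: it has no accumulation point in ℂ. -/

import Mathlib

open Complex Real Filter Set MeasureTheory Asymptotics

/-- The polynomial `P(z) = a₁ z^{m-1} + a₂ z^{m-2} + ⋯ + a_{m-1} z`. -/
noncomputable def Ppoly (m : ℕ) (a : ℕ → ℂ) (z : ℂ) : ℂ :=
  ∑ j ∈ Finset.Icc 1 (m - 1), a j * z ^ (m - j)

/-- `u` is an eigenfunction of `H(m,a)` associated with the eigenvalue `lam`: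
`u` is a nonconstant entire solution of `-u'' - ((iz)^m + P(iz)) u = lam u` decaying
along the rays `arg z = -π/2 ± 2π/(m+2)`. -/
def IsEigenfunction (m : ℕ) (a : ℕ → ℂ) (lam : ℂ) (u : ℂ → ℂ) : Prop :=
  Differentiable ℂ u ∧
  (¬ ∃ c : ℂ, ∀ z : ℂ, u z = c) ∧
  (∀ z : ℂ, -(deriv (deriv u) z)
      - ((Complex.I * z) ^ m + Ppoly m a (Complex.I * z)) * u z = lam * u z) ∧
  Filter.Tendsto (fun r : ℝ =>
      u ((r : ℂ) * Complex.exp (((-(Real.pi / 2) + 2 * Real.pi / ((m : ℝ) + 2) : ℝ) : ℂ)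
        * Complex.I))) Filter.atTop (nhds 0) ∧
  Filter.Tendsto (fun r : ℝ =>
      u ((r : ℂ) * Complex.exp (((-(Real.pi / 2) - 2 * Real.pi / ((m : ℝ) + 2) : ℝ) : ℂ)
        * Complex.I))) Filter.atTop (nhds 0)

/-- `lam` is an eigenvalue of `H(m,a)`. -/
def IsEigenvalue (m : ℕ) (a : ℕ → ℂ) (lam : ℂ) : Prop :=
  ∃ u : ℂ → ℂ, IsEigenfunction m a lam u

/-!
For a monic polynomial `Q` of degree `m ≥ 3`, the equation `v'' = (Q + μ) v` has a solution that is
subdominant along the positive axis and whose value and derivative at each point are entire in `μ`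
of order `1/2 + 1/m < 1` (WKB). After the substitution `w = i z` the two decay conditions concern
the directions `ω^{±1}`, `ω = exp (2πi / (m + 2))`. Rotating these directions onto the positive
axis, `λ` is an eigenvalue iff the subdominant solutions of the two rotated equations are
proportional, i.e. iff an entire function `D` of order less than one, their Wronskian at `0`,
vanishes at `λ`.

Let `F(λ)` be the product of the values of the two subdominant solutions at `1`. An energy identity
yields `|F| ≤ exp (-c √|λ|) |D|` near infinity in the sector of half-angle `3π / (m + 2)` around the
negative axis. If `D` had finitely many zeros it would be a polynomial, so `F` would tend to `0` in
this sector. The complement of the sector is narrow enough for the Phragmén-Lindelöf principle in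
order `1/2 + 1/m`, so Liouville's theorem would give `F = 0`, which is absurd.
-/

open scoped Polynomial Topology

/-! ### Entire power series solutions -/

lemma differentiable_tsum_of_summable_norm_on_bounded {f : ℕ → ℂ → ℂ}
    (hf : ∀ n, Differentiable ℂ (f n))
    (hb : ∀ R : ℝ, ∃ M : ℕ → ℝ, Summable M ∧ ∀ n z, ‖z‖ ≤ R → ‖f n z‖ ≤ M n) :
    Differentiable ℂ fun z ↦ ∑' n, f n z := by
  intro z
  obtain ⟨M, hM, hle⟩ := hb (‖z‖ + 1)
  have hz : z ∈ Metric.ball (0 : ℂ) (‖z‖ + 1) := by simp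
  refine (differentiableOn_tsum_of_summable_norm hM (fun n ↦ (hf n).differentiableOn)
    Metric.isOpen_ball fun n w hw ↦ hle n w ?_).differentiableAt (Metric.isOpen_ball.mem_nhds hz)
  exact (mem_ball_zero_iff.1 hw).le

/-- The power series `∑ cₙ wⁿ` has infinite radius of convergence. -/
def IsEntireCoeff {𝕜 : Type*} [NormedField 𝕜] (c : ℕ → 𝕜) : Prop :=
  ∀ ρ : ℝ, 0 ≤ ρ → Summable fun n ↦ ‖c n‖ * ρ ^ n

namespace IsEntireCoeff

lemma of_bounded {𝕜 : Type*} [NormedField 𝕜] {c : ℕ → 𝕜}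
    (h : ∀ ρ : ℝ, 0 ≤ ρ → ∃ K, ∀ n, ‖c n‖ * ρ ^ n ≤ K) : IsEntireCoeff c := by
  intro ρ hρ
  obtain ⟨K, hK⟩ := h (2 * ρ) (by positivity)
  refine (summable_geometric_two.mul_left K).of_nonneg_of_le (fun _ ↦ by positivity) fun n ↦ ?_
  calc ‖c n‖ * ρ ^ n = ‖c n‖ * (2 * ρ) ^ n * (1 / 2) ^ n := by
        rw [mul_assoc, ← mul_pow]; congr 2; ring
    _ ≤ K * (1 / 2) ^ n := by gcongr; exact hK n

lemma of_hasFiniteSupport {𝕜 : Type*} [NormedField 𝕜] {c : ℕ → 𝕜} (h : c.HasFiniteSupport) :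
    IsEntireCoeff c := fun ρ _ ↦
  summable_of_hasFiniteSupport <| h.subset fun n hn ↦ by
    contrapose! hn
    simp_all

lemma derivCoeff {𝕜 : Type*} [RCLike 𝕜] {c : ℕ → 𝕜} (hc : IsEntireCoeff c) :
    IsEntireCoeff fun n : ℕ ↦ (n + 1 : 𝕜) * c (n + 1) := by
  intro ρ hρ
  refine ((summable_nat_add_iff 1).2 (hc (2 * (ρ + 1)) (by positivity))).of_nonneg_of_le
    (fun _ ↦ by positivity) fun n ↦ ?_
  have hn : ‖(n + 1 : 𝕜)‖ ≤ 2 ^ (n + 1) := by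
    rw [← Nat.cast_succ, RCLike.norm_natCast]
    exact_mod_cast (n + 1).lt_two_pow_self.le
  have hpow : ρ ^ n ≤ (ρ + 1) ^ (n + 1) :=
    (pow_le_pow_left₀ hρ (by linarith) n).trans (pow_le_pow_right₀ (by linarith) n.le_succ)
  calc ‖(n + 1 : 𝕜) * c (n + 1)‖ * ρ ^ n = ‖c (n + 1)‖ * (‖(n + 1 : 𝕜)‖ * ρ ^ n) := by
        rw [norm_mul]; ring
    _ ≤ ‖c (n + 1)‖ * (2 * (ρ + 1)) ^ (n + 1) := by rw [mul_pow]; gcongr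

variable {c : ℕ → ℂ}

lemma summable_norm (hc : IsEntireCoeff c) (w : ℂ) : Summable fun n ↦ ‖c n * w ^ n‖ := by
  simpa only [norm_mul, norm_pow] using hc ‖w‖ (norm_nonneg w)

lemma differentiable_tsum (hc : IsEntireCoeff c) :
    Differentiable ℂ fun w ↦ ∑' n, c n * w ^ n :=
  differentiable_tsum_of_summable_norm_on_bounded (fun n ↦ by fun_prop) fun R ↦
    ⟨_, hc |R| (abs_nonneg R), fun n z hz ↦ by
      rw [norm_mul, norm_pow]
      have := hz.trans (le_abs_self R)
      gcongr⟩

lemma deriv_tsum (hc : IsEntireCoeff c) :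
    deriv (fun w ↦ ∑' n, c n * w ^ n) = fun w ↦ ∑' n : ℕ, (n + 1) * c (n + 1) * w ^ n := by
  ext w
  have hsum := hasSum_deriv_of_summable_norm (U := Metric.ball (0 : ℂ) (‖w‖ + 1)) (z := w)
    (F := fun n w ↦ c n * w ^ n) (hc (‖w‖ + 1) (by positivity)) (fun i ↦ by fun_prop)
    Metric.isOpen_ball (fun i z hz ↦ by
      have := (mem_ball_zero_iff.1 hz).le
      rw [norm_mul, norm_pow]
      gcongr) (by simp)
  simp only [deriv_const_mul_field, deriv_pow_field] at hsum
  rw [← hsum.tsum_eq, hsum.summable.tsum_eq_zero_add]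
  simp only [Nat.cast_zero, zero_mul, mul_zero, zero_add, Nat.cast_add, Nat.cast_one,
    Nat.add_sub_cancel]
  exact tsum_congr fun n ↦ by ring

end IsEntireCoeff

/-- Taylor coefficients at `0` of the solution of `v'' = (∑ qᵢ wⁱ) v` with `v(0) = v₀` and
`v'(0) = v₁`. -/
noncomputable def odeCoeff {𝕜 : Type*} [Field 𝕜] (q : ℕ → 𝕜) (v₀ v₁ : 𝕜) : ℕ → 𝕜
  | 0 => v₀
  | 1 => v₁
  | n + 2 => (∑ i : Fin (n + 1), q i * odeCoeff q v₀ v₁ (n - i)) / ((n + 1) * (n + 2))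
decreasing_by omega

lemma norm_odeCoeff_le {𝕜 : Type*} [RCLike 𝕜] {q : ℕ → 𝕜} {M : ℕ → ℝ} (v₀ v₁ : 𝕜)
    (hq : ∀ i, ‖q i‖ ≤ M i) (n : ℕ) : ‖odeCoeff q v₀ v₁ n‖ ≤ odeCoeff M ‖v₀‖ ‖v₁‖ n := by
  induction n using Nat.strong_induction_on with
  | _ n ih =>
    match n with
    | 0 => simp [odeCoeff]
    | 1 => simp [odeCoeff]
    | n + 2 =>
      have hden : ‖((n + 1) * (n + 2) : 𝕜)‖ = (n + 1) * (n + 2) := by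
        exact_mod_cast RCLike.norm_natCast (K := 𝕜) ((n + 1) * (n + 2))
      rw [odeCoeff, odeCoeff, norm_div, hden]
      gcongr
      refine (norm_sum_le _ _).trans (Finset.sum_le_sum fun i _ ↦ ?_)
      rw [norm_mul]
      exact mul_le_mul (hq _) (ih _ (by omega)) (norm_nonneg _) ((norm_nonneg _).trans (hq _))

lemma norm_odeCoeff_mul_pow_le {𝕜 : Type*} [RCLike 𝕜] {q : ℕ → 𝕜} {v₀ v₁ : 𝕜} {ρ A K : ℝ}
    (hρ : 0 ≤ ρ) {n : ℕ} (hA : ∑ i ∈ Finset.range (n + 1), ‖q i‖ * ρ ^ i ≤ A)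
    (hAn : ρ ^ 2 * A ≤ n) (hK : ∀ k ≤ n, ‖odeCoeff q v₀ v₁ k‖ * ρ ^ k ≤ K) :
    ‖odeCoeff q v₀ v₁ (n + 2)‖ * ρ ^ (n + 2) ≤ K := by
  have : 0 ≤ A := le_trans (by positivity) hA
  have hK₀ : 0 ≤ K := le_trans (by positivity) (hK 0 n.zero_le)
  have hden : ‖((n + 1) * (n + 2) : 𝕜)‖ = (n + 1) * (n + 2) := by
    exact_mod_cast RCLike.norm_natCast (K := 𝕜) ((n + 1) * (n + 2))
  have hterm (i : Fin (n + 1)) : ‖q i * odeCoeff q v₀ v₁ (n - i)‖ * ρ ^ (n + 2)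
      ≤ ‖q i‖ * ρ ^ (i : ℕ) * (K * ρ ^ 2) := by
    have hsplit : ρ ^ (n + 2) = ρ ^ (i : ℕ) * ρ ^ (n - (i : ℕ)) * ρ ^ 2 := by
      rw [← pow_add, ← pow_add]; congr 1; omega
    calc _ = ‖q i‖ * ρ ^ (i : ℕ) * (‖odeCoeff q v₀ v₁ (n - i)‖ * ρ ^ (n - (i : ℕ)) * ρ ^ 2) := by
          rw [norm_mul, hsplit]; ring
      _ ≤ _ := by gcongr; exact hK _ (by omega)
  rw [odeCoeff, norm_div, hden, div_mul_eq_mul_div, div_le_iff₀ (by positivity)]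
  calc _ ≤ ∑ i : Fin (n + 1), ‖q i‖ * ρ ^ (i : ℕ) * (K * ρ ^ 2) := by
        refine (mul_le_mul_of_nonneg_right (norm_sum_le _ _) (by positivity)).trans ?_
        rw [Finset.sum_mul]
        exact Finset.sum_le_sum fun i _ ↦ hterm i
    _ ≤ A * (K * ρ ^ 2) := by
        rw [← Finset.sum_mul, Fin.sum_univ_eq_sum_range (fun i ↦ ‖q i‖ * ρ ^ i)]
        gcongr
    _ = K * (ρ ^ 2 * A) := by ring
    _ ≤ K * ((n + 1) * (n + 2)) :=
      mul_le_mul_of_nonneg_left (hAn.trans (by nlinarith [(n.cast_nonneg : (0 : ℝ) ≤ n)])) hK₀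

lemma IsEntireCoeff.odeCoeff {𝕜 : Type*} [RCLike 𝕜] {q : ℕ → 𝕜} (hq : IsEntireCoeff q)
    (v₀ v₁ : 𝕜) : IsEntireCoeff (odeCoeff q v₀ v₁) := by
  refine .of_bounded fun ρ hρ ↦ ?_
  obtain ⟨N, hN⟩ := exists_nat_ge (ρ ^ 2 * ∑' i, ‖q i‖ * ρ ^ i)
  refine ⟨∑ n ∈ Finset.range (N + 2), ‖_root_.odeCoeff q v₀ v₁ n‖ * ρ ^ n, fun n ↦ ?_⟩
  induction n using Nat.strong_induction_on with
  | _ n ih =>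
    by_cases hn : n < N + 2
    · exact Finset.single_le_sum (f := fun n ↦ ‖_root_.odeCoeff q v₀ v₁ n‖ * ρ ^ n)
        (fun i _ ↦ by positivity) (Finset.mem_range.2 hn)
    · obtain ⟨k, rfl⟩ : ∃ k, n = k + 2 := ⟨n - 2, by omega⟩
      refine norm_odeCoeff_mul_pow_le hρ ((hq ρ hρ).sum_le_tsum _ fun i _ ↦ by positivity)
        (hN.trans (by exact_mod_cast (by omega : N ≤ k))) fun j hj ↦ ih j (by omega)

lemma odeCoeff_recurrence {𝕜 : Type*} [Field 𝕜] [CharZero 𝕜] (q : ℕ → 𝕜) (v₀ v₁ : 𝕜) (n : ℕ) :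
    (n + 1 : 𝕜) * ((n + 1 + 1) * odeCoeff q v₀ v₁ (n + 1 + 1)) =
      ∑ p ∈ Finset.HasAntidiagonal.antidiagonal n, q p.1 * odeCoeff q v₀ v₁ p.2 := by
  have h₁ : (n + 1 : 𝕜) ≠ 0 := by exact_mod_cast n.succ_ne_zero
  have h₂ : (n + 2 : 𝕜) ≠ 0 := by exact_mod_cast (n + 1).succ_ne_zero
  rw [odeCoeff, Fin.sum_univ_eq_sum_range (fun i ↦ q i * odeCoeff q v₀ v₁ (n - i)),
    Finset.Nat.sum_antidiagonal_eq_sum_range_succ (fun i j ↦ q i * odeCoeff q v₀ v₁ j)]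
  field_simp
  ring

lemma tsum_mul_tsum_odeCoeff {q : ℕ → ℂ} (hq : IsEntireCoeff q) (v₀ v₁ w : ℂ) :
    (∑' n, q n * w ^ n) * ∑' n, odeCoeff q v₀ v₁ n * w ^ n =
      ∑' n : ℕ, (n + 1) * ((n + 1 + 1) * odeCoeff q v₀ v₁ (n + 1 + 1)) * w ^ n := by
  rw [tsum_mul_tsum_eq_tsum_sum_antidiagonal_of_summable_norm (hq.summable_norm w)
    ((hq.odeCoeff v₀ v₁).summable_norm w)]
  refine tsum_congr fun n ↦ ?_
  rw [odeCoeff_recurrence, Finset.sum_mul]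
  refine Finset.sum_congr rfl fun p hp ↦ ?_
  rw [← Finset.HasAntidiagonal.mem_antidiagonal.1 hp, pow_add]
  ring

/-- `v` is an entire solution of `v'' = Q v`. -/
structure IsSol (Q v : ℂ → ℂ) : Prop where
  differentiable : Differentiable ℂ v
  deriv_deriv : ∀ w, deriv (deriv v) w = Q w * v w

/-- The entire solution of `v'' = (Q + μ) v` with `v(0) = v₀` and `v'(0) = v₁`. -/
noncomputable def odeSol (Q : ℂ[X]) (v₀ v₁ μ w : ℂ) : ℂ :=
  ∑' n, odeCoeff (Q + Polynomial.C μ).coeff v₀ v₁ n * w ^ n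

section odeSol

variable (Q : ℂ[X]) (v₀ v₁ : ℂ)

lemma isEntireCoeff_coeff : IsEntireCoeff Q.coeff :=
  .of_hasFiniteSupport <| Q.support.finite_toSet.subset fun n hn ↦ by simpa using hn

lemma isEntireCoeff_odeCoeff : IsEntireCoeff (odeCoeff Q.coeff v₀ v₁) :=
  (isEntireCoeff_coeff Q).odeCoeff v₀ v₁

lemma deriv_odeSol (μ : ℂ) : deriv (odeSol Q v₀ v₁ μ) = fun w ↦
    ∑' n : ℕ, (n + 1) * odeCoeff (Q + Polynomial.C μ).coeff v₀ v₁ (n + 1) * w ^ n :=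
  (isEntireCoeff_odeCoeff _ v₀ v₁).deriv_tsum

lemma isSol_odeSol (μ : ℂ) : IsSol (fun w ↦ Q.eval w + μ) (odeSol Q v₀ v₁ μ) where
  differentiable := (isEntireCoeff_odeCoeff _ v₀ v₁).differentiable_tsum
  deriv_deriv w := by
    have heval : Q.eval w + μ = ∑' n, (Q + Polynomial.C μ).coeff n * w ^ n := by
      rw [tsum_eq_sum (s := (Q + Polynomial.C μ).support) fun n hn ↦ by
        rw [Polynomial.notMem_support_iff.1 hn, zero_mul]]
      simpa [Polynomial.sum] using Polynomial.eval_eq_sum (p := Q + Polynomial.C μ) (x := w)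
    rw [deriv_odeSol, (isEntireCoeff_odeCoeff _ v₀ v₁).derivCoeff.deriv_tsum, heval, odeSol,
      tsum_mul_tsum_odeCoeff (isEntireCoeff_coeff _)]
    simp only [Nat.cast_add, Nat.cast_one]

@[simp] lemma odeSol_zero (μ : ℂ) : odeSol Q v₀ v₁ μ 0 = v₀ := by
  rw [odeSol, tsum_eq_single 0 (by simp +contextual)]
  simp [odeCoeff]

@[simp] lemma deriv_odeSol_zero (μ : ℂ) : deriv (odeSol Q v₀ v₁ μ) 0 = v₁ := by
  simp only [deriv_odeSol]
  rw [tsum_eq_single 0 (by simp +contextual)]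
  simp [odeCoeff]

lemma differentiable_odeCoeff_param (n : ℕ) :
    Differentiable ℂ fun μ ↦ odeCoeff (Q + Polynomial.C μ).coeff v₀ v₁ n := by
  induction n using Nat.strong_induction_on with
  | _ n ih =>
    match n with
    | 0 => simp [odeCoeff]
    | 1 => simp [odeCoeff]
    | n + 2 =>
      simp_rw [odeCoeff]
      refine (Differentiable.fun_sum fun i _ ↦ .mul ?_ (ih _ (by omega))).div_const _
      simp only [Polynomial.coeff_add, Polynomial.coeff_C]
      split_ifs <;> fun_prop

lemma exists_isEntireCoeff_bound_odeCoeff (B : ℝ) :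
    ∃ M : ℕ → ℝ, IsEntireCoeff M ∧ ∀ μ : ℂ, ‖μ‖ ≤ B →
      ∀ n, ‖odeCoeff (Q + Polynomial.C μ).coeff v₀ v₁ n‖ ≤ ‖M n‖ := by
  refine ⟨odeCoeff (fun n ↦ ‖Q.coeff n‖ + (Polynomial.C B).coeff n) ‖v₀‖ ‖v₁‖,
    .odeCoeff (.of_hasFiniteSupport ?_) _ _, fun μ hμ n ↦
    (norm_odeCoeff_le v₀ v₁ (fun i ↦ ?_) n).trans (le_abs_self _)⟩
  · refine (Q.support ∪ (Polynomial.C B).support).finite_toSet.subset fun n hn ↦ ?_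
    contrapose! hn
    simp_all
  · rw [Polynomial.coeff_add]
    refine (norm_add_le _ _).trans ?_
    gcongr
    simp only [Polynomial.coeff_C]
    split_ifs <;> simp [hμ]

lemma differentiable_odeSol_param (w : ℂ) : Differentiable ℂ fun μ ↦ odeSol Q v₀ v₁ μ w := by
  refine differentiable_tsum_of_summable_norm_on_bounded
    (fun n ↦ (differentiable_odeCoeff_param Q v₀ v₁ n).mul_const _) fun B ↦ ?_
  obtain ⟨M, hM, hle⟩ := exists_isEntireCoeff_bound_odeCoeff Q v₀ v₁ B
  refine ⟨_, hM ‖w‖ (norm_nonneg w), fun n μ hμ ↦ ?_⟩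
  rw [norm_mul, norm_pow]
  gcongr
  exact hle μ hμ n

lemma differentiable_deriv_odeSol_param (w : ℂ) :
    Differentiable ℂ fun μ ↦ deriv (odeSol Q v₀ v₁ μ) w := by
  simp_rw [deriv_odeSol]
  refine differentiable_tsum_of_summable_norm_on_bounded
    (fun n ↦ ((differentiable_odeCoeff_param Q v₀ v₁ _).const_mul _).mul_const _) fun B ↦ ?_
  obtain ⟨M, hM, hle⟩ := exists_isEntireCoeff_bound_odeCoeff Q v₀ v₁ B
  refine ⟨_, hM.derivCoeff ‖w‖ (norm_nonneg w), fun n μ hμ ↦ ?_⟩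
  have hcast : ‖(n + 1 : ℂ)‖ = ‖(n + 1 : ℝ)‖ := by exact_mod_cast (norm_real ((n : ℝ) + 1))
  rw [norm_mul, norm_pow, norm_mul, norm_mul, hcast]
  gcongr
  exact hle μ hμ _

end odeSol

/-! ### Real calculus along the half-line -/

lemma le_mul_exp_sub_of_deriv_nonneg {f f' E E' : ℝ → ℝ} {a b : ℝ} (hab : a ≤ b)
    (hf : ∀ x ∈ Icc a b, HasDerivAt f (f' x) x) (hE : ∀ x ∈ Icc a b, HasDerivAt E (E' x) x)
    (h : ∀ x ∈ Icc a b, 0 ≤ f' x + f x * E' x) : f a ≤ f b * Real.exp (E b - E a) := by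
  have hd (x) (hx : x ∈ Icc a b) := (hf x hx).mul (hE x hx).exp
  have hmono : MonotoneOn (fun x ↦ f x * Real.exp (E x)) (Icc a b) := by
    refine monotoneOn_of_hasDerivWithinAt_nonneg (convex_Icc a b)
      (fun x hx ↦ (hd x hx).continuousAt.continuousWithinAt)
      (fun x hx ↦ (hd x (interior_subset hx)).hasDerivWithinAt) fun x hx ↦ ?_
    have := mul_nonneg (h x (interior_subset hx)) (Real.exp_pos (E x)).le
    linarith
  rw [Real.exp_sub, ← mul_div_assoc, le_div_iff₀ (Real.exp_pos _)]
  exact hmono (left_mem_Icc.2 hab) (right_mem_Icc.2 hab) hab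

lemma tendsto_atTop_of_deriv_ge {f f' : ℝ → ℝ} {ε : ℝ} (hε : 0 < ε)
    (hf : ∀ x, HasDerivAt f (f' x) x) (h : ∀ᶠ x in atTop, ε ≤ f' x) : Tendsto f atTop atTop := by
  obtain ⟨T, hT⟩ := eventually_atTop.1 h
  have hlin : Tendsto (fun x ↦ f T + ε * (x - T)) atTop atTop :=
    tendsto_atTop_add_const_left _ _
      ((tendsto_atTop_add_const_right _ (-T) tendsto_id).const_mul_atTop hε)
  refine tendsto_atTop_mono' _ ?_ hlin
  filter_upwards [eventually_ge_atTop T] with x hx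
  have := (convex_Ici T).mul_sub_le_image_sub_of_le_deriv
    (fun y _ ↦ (hf y).continuousAt.continuousWithinAt)
    (fun y _ ↦ (hf y).differentiableAt.differentiableWithinAt)
    (fun y hy ↦ (hT y (interior_subset hy)).trans (hf y).deriv.ge) T self_mem_Ici x hx hx
  linarith

lemma nonneg_of_antitoneOn_of_frequently {f : ℝ → ℝ} {a : ℝ} (hf : AntitoneOn f (Ici a))
    (h : ∀ ε > 0, ∃ᶠ x in atTop, -ε < f x) {x : ℝ} (hx : a ≤ x) : 0 ≤ f x := by
  refine le_of_forall_pos_le_add fun ε hε ↦ ?_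
  obtain ⟨y, hy, hxy⟩ := ((h ε hε).and_eventually (eventually_ge_atTop x)).exists
  linarith [hf hx (hx.trans hxy) hxy]

lemma hasDerivAt_norm_sq {u : ℝ → ℂ} {u' : ℂ} {r : ℝ} (h : HasDerivAt u u' r) :
    HasDerivAt (fun r ↦ ‖u r‖ ^ 2) (2 * (starRingEnd ℂ (u r) * u').re) r := by
  simpa only [Complex.inner, mul_comm u'] using h.norm_sq

lemma hasDerivAt_re_conj_mul {u u' : ℝ → ℂ} {u'' : ℂ} {r : ℝ} (η : ℂ) (h : HasDerivAt u (u' r) r)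
    (h' : HasDerivAt u' u'' r) :
    HasDerivAt (fun r ↦ (starRingEnd ℂ (u r) * (η * u' r)).re)
      ((starRingEnd ℂ (u r) * (η * u'')).re + η.re * ‖u' r‖ ^ 2) r := by
  have hinner := h.inner ℝ (h'.const_mul η)
  simp only [Complex.inner, mul_comm _ (starRingEnd ℂ (u _))] at hinner
  convert! hinner using 2
  rw [mul_assoc, Complex.mul_conj, Complex.normSq_eq_norm_sq, Complex.re_mul_ofReal]

lemma abs_re_conj_mul_le (a b : ℂ) : |(starRingEnd ℂ a * b).re| ≤ ‖a‖ * ‖b‖ := by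
  simpa only [norm_mul, RCLike.norm_conj] using Complex.abs_re_le_norm (starRingEnd ℂ a * b)

lemma re_conj_mul_mul_self (a z : ℂ) : (starRingEnd ℂ z * (a * z)).re = a.re * ‖z‖ ^ 2 := by
  rw [mul_left_comm, ← Complex.normSq_eq_conj_mul_self, Complex.normSq_eq_norm_sq,
    Complex.re_mul_ofReal]

/-! ### Entire solutions and their Wronskians -/

/-- The Wronskian `u v' - u' v`. -/
noncomputable def wronskian (u v : ℂ → ℂ) (w : ℂ) : ℂ := u w * deriv v w - deriv u w * v w

lemma exists_eq_const_mul_of_wronskian_eq_zero {u v : ℂ → ℂ} (hu : Differentiable ℂ u)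
    (hv : Differentiable ℂ v) (hW : ∀ w, wronskian u v w = 0) {w₀ : ℂ} (hw₀ : u w₀ ≠ 0) :
    ∃ c : ℂ, ∀ w, v w = c * u w := by
  obtain ⟨δ, hδ, hne⟩ := Metric.eventually_nhds_iff_ball.1
    ((hu w₀).continuousAt.eventually_ne hw₀)
  have hconst : ∀ w ∈ Metric.ball w₀ δ, v w / u w = v w₀ / u w₀ := by
    intro w hw
    refine Metric.isOpen_ball.is_const_of_deriv_eq_zero (f := fun w ↦ v w / u w)
      (convex_ball w₀ δ).isPreconnected
      (fun z hz ↦ ((hv z).div (hu z) (hne z hz)).differentiableWithinAt) (fun z hz ↦ ?_) hw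
      (Metric.mem_ball_self hδ)
    have hWz := hW z
    rw [wronskian] at hWz
    rw [deriv_fun_div (hv z) (hu z) (hne z hz), Pi.zero_apply,
      show deriv v z * u z - v z * deriv u z = 0 by linear_combination hWz, zero_div]
  refine ⟨v w₀ / u w₀, congrFun (AnalyticOnNhd.eq_of_eventuallyEq (z₀ := w₀)
    (fun z _ ↦ hv.analyticAt z) (fun z _ ↦ (hu.const_mul _).analyticAt z) ?_)⟩
  filter_upwards [Metric.ball_mem_nhds w₀ hδ] with w hw
  rw [← hconst w hw, div_mul_cancel₀ _ (hne w hw)]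

namespace IsSol

variable {Q u v : ℂ → ℂ}

lemma differentiable_deriv (hv : IsSol Q v) : Differentiable ℂ (deriv v) :=
  hv.differentiable.contDiff.differentiable_deriv_two

lemma hasDerivAt_ofReal (hv : IsSol Q v) (r : ℝ) : HasDerivAt (fun r : ℝ ↦ v r) (deriv v r) r :=
  (hv.differentiable r).hasDerivAt.comp_ofReal

lemma hasDerivAt_deriv_ofReal (hv : IsSol Q v) (r : ℝ) :
    HasDerivAt (fun r : ℝ ↦ deriv v r) (Q r * v r) r := by
  rw [← hv.deriv_deriv]
  exact (hv.differentiable_deriv r).hasDerivAt.comp_ofReal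

lemma sub (hu : IsSol Q u) (hv : IsSol Q v) : IsSol Q (u - v) where
  differentiable := hu.differentiable.sub hv.differentiable
  deriv_deriv w := by
    have hd : deriv (u - v) = deriv u - deriv v := by
      ext w; exact deriv_sub (hu.differentiable w) (hv.differentiable w)
    rw [hd, deriv_sub (hu.differentiable_deriv w) (hv.differentiable_deriv w), hu.deriv_deriv,
      hv.deriv_deriv, Pi.sub_apply, mul_sub]

lemma comp_mul (hv : IsSol Q v) (ω : ℂ) :
    IsSol (fun w ↦ ω ^ 2 * Q (ω * w)) fun w ↦ v (ω * w) where
  differentiable := hv.differentiable.comp (differentiable_id.const_mul ω)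
  deriv_deriv w := by
    have hd : deriv (fun w ↦ v (ω * w)) = fun w ↦ ω * deriv v (ω * w) := by
      ext w; exact deriv_comp_mul_left ω v w
    rw [hd, deriv_const_mul_field, deriv_comp_mul_left ω (deriv v), smul_eq_mul, hv.deriv_deriv]
    ring

lemma wronskian_eq (hu : IsSol Q u) (hv : IsSol Q v) (w z : ℂ) :
    wronskian u v w = wronskian u v z := by
  have hd (w) := ((hu.differentiable w).hasDerivAt.mul (hv.differentiable_deriv w).hasDerivAt).sub
    ((hu.differentiable_deriv w).hasDerivAt.mul (hv.differentiable w).hasDerivAt)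
  refine is_const_of_deriv_eq_zero (f := wronskian u v) (fun w ↦ (hd w).differentiableAt)
    (fun w ↦ (hd w).deriv.trans ?_) w z
  rw [hu.deriv_deriv, hv.deriv_deriv]
  ring

lemma norm_sq_le_mul_exp (hv : IsSol Q v) {M a b : ℝ} (hM : 0 ≤ M) (hab : a ≤ b)
    (hQ : ∀ r ∈ Icc a b, ‖Q r‖ ≤ M ^ 2) :
    ‖deriv v a‖ ^ 2 + M ^ 2 * ‖v a‖ ^ 2 ≤
      (‖deriv v b‖ ^ 2 + M ^ 2 * ‖v b‖ ^ 2) * Real.exp (2 * M * b - 2 * M * a) := by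
  refine le_mul_exp_sub_of_deriv_nonneg
    (f := fun r : ℝ ↦ ‖deriv v r‖ ^ 2 + M ^ 2 * ‖v r‖ ^ 2) (E := fun r ↦ 2 * M * r)
    (E' := fun _ ↦ 2 * M) hab
    (fun r _ ↦ (hasDerivAt_norm_sq (hv.hasDerivAt_deriv_ofReal r)).add
      ((hasDerivAt_norm_sq (hv.hasDerivAt_ofReal r)).const_mul _))
    (fun r _ ↦ by simpa using (hasDerivAt_id r).const_mul (2 * M)) fun r hr ↦ ?_
  have h₁ := (abs_le.1 (abs_re_conj_mul_le (deriv v r) (Q r * v r))).1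
  have h₂ := mul_le_mul_of_nonneg_left
    (abs_le.1 (abs_re_conj_mul_le (v r) (deriv v r))).1 (sq_nonneg M)
  have h₃ : ‖deriv v r‖ * ‖Q r * v r‖ ≤ ‖deriv v r‖ * (M ^ 2 * ‖v r‖) := by
    rw [norm_mul]
    gcongr
    exact hQ r hr
  nlinarith [mul_nonneg hM (sq_nonneg (‖deriv v r‖ - M * ‖v r‖))]

lemma frequently_norm_deriv_lt_one (hu : IsSol Q u) (hv : IsSol Q v)
    (hQ : ∀ᶠ r : ℝ in atTop, 0 ≤ (Q r).re) (tu : Tendsto (fun r : ℝ ↦ u r) atTop (𝓝 0))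
    (tv : Tendsto (fun r : ℝ ↦ v r) atTop (𝓝 0)) :
    ∃ᶠ r : ℝ in atTop, ‖deriv u r‖ < 1 ∧ ‖deriv v r‖ < 1 := by
  intro hlarge
  have hψ := tendsto_atTop_of_deriv_ge one_pos (fun r ↦
    (hasDerivAt_re_conj_mul 1 (hu.hasDerivAt_ofReal r) (hu.hasDerivAt_deriv_ofReal r)).add
    (hasDerivAt_re_conj_mul 1 (hv.hasDerivAt_ofReal r) (hv.hasDerivAt_deriv_ofReal r))) <| by
      filter_upwards [hlarge, hQ] with r hr hQr
      have hone : 1 ≤ ‖deriv u r‖ ^ 2 + ‖deriv v r‖ ^ 2 := by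
        by_contra! hlt
        exact hr ⟨by nlinarith [norm_nonneg (deriv u r), sq_nonneg ‖deriv v r‖],
          by nlinarith [norm_nonneg (deriv v r), sq_nonneg ‖deriv u r‖]⟩
      simp only [one_mul, re_conj_mul_mul_self, Complex.one_re]
      nlinarith [mul_nonneg hQr (sq_nonneg ‖u r‖), mul_nonneg hQr (sq_nonneg ‖v r‖)]
  have hΦ := tendsto_atTop_of_deriv_ge one_pos (fun r ↦
    (hasDerivAt_norm_sq (hu.hasDerivAt_ofReal r)).add
      (hasDerivAt_norm_sq (hv.hasDerivAt_ofReal r))) <| by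
      filter_upwards [hψ.eventually_ge_atTop 1] with r hr
      simp only [Pi.add_apply, one_mul] at hr
      linarith
  exact not_tendsto_nhds_of_tendsto_atTop hΦ _ ((tu.norm.pow 2).add (tv.norm.pow 2))

lemma wronskian_eq_zero_of_tendsto (hu : IsSol Q u) (hv : IsSol Q v)
    (hQ : ∀ᶠ r : ℝ in atTop, 0 ≤ (Q r).re) (tu : Tendsto (fun r : ℝ ↦ u r) atTop (𝓝 0))
    (tv : Tendsto (fun r : ℝ ↦ v r) atTop (𝓝 0)) (w : ℂ) : wronskian u v w = 0 := by
  have hlim : Tendsto (fun r : ℝ ↦ ‖u r‖ + ‖v r‖) atTop (𝓝 0) := by simpa using tu.norm.add tv.norm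
  refine norm_le_zero_iff.1 (ge_of_tendsto_of_frequently hlim ?_)
  refine (hu.frequently_norm_deriv_lt_one hv hQ tu tv).mono fun r ⟨hu', hv'⟩ ↦ ?_
  rw [hu.wronskian_eq hv w r, wronskian]
  refine (norm_sub_le _ _).trans ?_
  rw [norm_mul, norm_mul, mul_comm ‖deriv u r‖]
  exact add_le_add (mul_le_of_le_one_right (norm_nonneg _) hv'.le)
    (mul_le_of_le_one_right (norm_nonneg _) hu'.le)

lemma exists_eq_const_mul_of_tendsto (hu : IsSol Q u) (hv : IsSol Q v)
    (hQ : ∀ᶠ r : ℝ in atTop, 0 ≤ (Q r).re) (tu : Tendsto (fun r : ℝ ↦ u r) atTop (𝓝 0))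
    (tv : Tendsto (fun r : ℝ ↦ v r) atTop (𝓝 0)) (hne : u ≠ 0) :
    ∃ c : ℂ, ∀ w, v w = c * u w := by
  obtain ⟨w₀, hw₀⟩ := Function.ne_iff.1 hne
  exact exists_eq_const_mul_of_wronskian_eq_zero hu.differentiable hv.differentiable
    (hu.wronskian_eq_zero_of_tendsto hv hQ tu tv) hw₀

end IsSol

/-! ### The energy of a decaying solution -/

/-- The quantity `-Re (ḡ η g')` along the positive half-line. Along a decaying solution of
`v'' = Q v` it is nonincreasing as soon as `η` and `η Q` have nonnegative real part. -/
noncomputable def energy (η : ℂ) (g : ℂ → ℂ) (r : ℝ) : ℝ :=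
  -(starRingEnd ℂ (g r) * (η * deriv g r)).re

/-- The factor `η`, of norm at most `1`, rotates both `1` and `Q` quantitatively into the right
half-plane along the positive half-line; then decaying solutions of `v'' = Q v` decay at rate at
least `c s`. -/
structure IsCoerciveRotation (Q : ℂ → ℂ) (η : ℂ) (c s : ℝ) : Prop where
  norm_le_one : ‖η‖ ≤ 1
  pos_left : 0 < c
  pos_right : 0 < s
  le_re : c ≤ η.re
  le_re_mul : ∀ r : ℝ, 0 ≤ r → c * s ^ 2 ≤ (η * Q r).re

section energy

variable {Q g : ℂ → ℂ} {η : ℂ} {c s : ℝ}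

lemma abs_energy_le (hη : ‖η‖ ≤ 1) (r : ℝ) : |energy η g r| ≤ ‖g r‖ * ‖deriv g r‖ := by
  rw [energy, abs_neg]
  refine (abs_re_conj_mul_le _ _).trans (mul_le_mul_of_nonneg_left ?_ (norm_nonneg _))
  rw [norm_mul]
  exact mul_le_of_le_one_left (norm_nonneg _) hη

lemma hasDerivAt_energy (hg : IsSol Q g) (r : ℝ) : HasDerivAt (energy η g)
    (-((η * Q r).re * ‖g r‖ ^ 2 + η.re * ‖deriv g r‖ ^ 2)) r := by
  rw [← re_conj_mul_mul_self, mul_assoc]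
  exact (hasDerivAt_re_conj_mul η (hg.hasDerivAt_ofReal r) (hg.hasDerivAt_deriv_ofReal r)).neg

namespace IsCoerciveRotation

lemma mul_norm_le (hη : IsCoerciveRotation Q η c s) {r : ℝ} (hr : 0 ≤ r) :
    2 * c * s * (‖g r‖ * ‖deriv g r‖) ≤ (η * Q r).re * ‖g r‖ ^ 2 + η.re * ‖deriv g r‖ ^ 2 := by
  have h₁ := mul_le_mul_of_nonneg_right (hη.le_re_mul r hr) (sq_nonneg ‖g r‖)
  have h₂ := mul_le_mul_of_nonneg_right hη.le_re (sq_nonneg ‖deriv g r‖)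
  nlinarith [mul_nonneg hη.pos_left.le (sq_nonneg (s * ‖g r‖ - ‖deriv g r‖))]

lemma antitoneOn_energy (hη : IsCoerciveRotation Q η c s) (hg : IsSol Q g) :
    AntitoneOn (energy η g) (Ici 0) := by
  refine antitoneOn_of_hasDerivWithinAt_nonpos (convex_Ici 0)
    (fun r _ ↦ (hasDerivAt_energy hg r).continuousAt.continuousWithinAt)
    (fun r _ ↦ (hasDerivAt_energy hg r).hasDerivWithinAt) fun r hr ↦ ?_
  have hpos : 0 ≤ 2 * c * s * (‖g r‖ * ‖deriv g r‖) := by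
    have := hη.pos_left
    have := hη.pos_right
    positivity
  linarith [hη.mul_norm_le (g := g) (interior_subset hr)]

lemma frequently_abs_energy_lt (hη : IsCoerciveRotation Q η c s) (hg : IsSol Q g)
    (hQ : ∀ᶠ r : ℝ in atTop, 0 ≤ (Q r).re) (tg : Tendsto (fun r : ℝ ↦ g r) atTop (𝓝 0))
    {ε : ℝ} (hε : 0 < ε) : ∃ᶠ r in atTop, |energy η g r| < ε := by
  have hsmall : ∀ᶠ r : ℝ in atTop, ‖g r‖ < ε := tg.norm.eventually_lt_const (by simpa using hε)
  refine ((hg.frequently_norm_deriv_lt_one hg hQ tg tg).and_eventually hsmall).mono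
    fun r ⟨⟨hd, _⟩, hr⟩ ↦ ?_
  exact ((abs_energy_le hη.norm_le_one r).trans
    (mul_le_of_le_one_right (norm_nonneg _) hd.le)).trans_lt hr

lemma energy_nonneg (hη : IsCoerciveRotation Q η c s) (hg : IsSol Q g)
    (hQ : ∀ᶠ r : ℝ in atTop, 0 ≤ (Q r).re) (tg : Tendsto (fun r : ℝ ↦ g r) atTop (𝓝 0))
    {r : ℝ} (hr : 0 ≤ r) : 0 ≤ energy η g r :=
  nonneg_of_antitoneOn_of_frequently (hη.antitoneOn_energy hg)
    (fun _ hε ↦ (hη.frequently_abs_energy_lt hg hQ tg hε).mono fun _ h ↦ (abs_lt.1 h).1) hr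

lemma mul_norm_sq_le_energy (hη : IsCoerciveRotation Q η c s) (hg : IsSol Q g)
    (hQ : ∀ᶠ r : ℝ in atTop, 0 ≤ (Q r).re) (tg : Tendsto (fun r : ℝ ↦ g r) atTop (𝓝 0))
    {r : ℝ} (hr : 0 ≤ r) : c * s * ‖g r‖ ^ 2 ≤ energy η g r := by
  have hcs : 0 < c * s := mul_pos hη.pos_left hη.pos_right
  have hd (r : ℝ) := (hasDerivAt_energy (η := η) hg r).sub
    ((hasDerivAt_norm_sq (hg.hasDerivAt_ofReal r)).const_mul (c * s))
  refine sub_nonneg.1 (nonneg_of_antitoneOn_of_frequently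
    (f := fun r ↦ energy η g r - c * s * ‖g r‖ ^ 2) ?_ (fun ε hε ↦ ?_) hr)
  · refine antitoneOn_of_hasDerivWithinAt_nonpos (convex_Ici 0)
      (fun r _ ↦ (hd r).continuousAt.continuousWithinAt)
      (fun r _ ↦ (hd r).hasDerivWithinAt) fun r hr ↦ ?_
    have := mul_le_mul_of_nonneg_left (abs_le.1 (abs_re_conj_mul_le (g r) (deriv g r))).1 hcs.le
    linarith [hη.mul_norm_le (g := g) (interior_subset hr)]
  · have hsmall : Tendsto (fun r : ℝ ↦ c * s * ‖g r‖ ^ 2) atTop (𝓝 0) := by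
      simpa using (tg.norm.pow 2).const_mul (c * s)
    refine Eventually.frequently ?_
    filter_upwards [hsmall.eventually_lt_const hε, eventually_ge_atTop 0] with t ht ht₀
    linarith [hη.energy_nonneg hg hQ tg ht₀]

lemma mul_norm_sq_le_exp_mul_energy (hη : IsCoerciveRotation Q η c s) (hg : IsSol Q g)
    (hQ : ∀ᶠ r : ℝ in atTop, 0 ≤ (Q r).re) (tg : Tendsto (fun r : ℝ ↦ g r) atTop (𝓝 0))
    {r : ℝ} (hr : 0 ≤ r) :
    c * s * ‖g r‖ ^ 2 ≤ Real.exp (-(2 * c * s * r)) * energy η g 0 := by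
  have hcs : 0 ≤ 2 * c * s := by nlinarith [mul_pos hη.pos_left hη.pos_right]
  have hexp := le_mul_exp_sub_of_deriv_nonneg (f := fun r ↦ -energy η g r)
    (E := fun r ↦ 2 * c * s * r) (E' := fun _ ↦ 2 * c * s) hr
    (fun r _ ↦ (hasDerivAt_energy hg r).neg)
    (fun r _ ↦ by simpa using (hasDerivAt_id r).const_mul (2 * c * s)) fun r hr ↦ by
      have := mul_le_mul_of_nonneg_left
        ((le_abs_self _).trans (abs_energy_le (g := g) hη.norm_le_one r)) hcs
      linarith [hη.mul_norm_le (g := g) hr.1]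
  rw [mul_zero, sub_zero, neg_mul, neg_le_neg_iff] at hexp
  rw [Real.exp_neg, inv_mul_eq_div, le_div_iff₀ (Real.exp_pos _)]
  exact (mul_le_mul_of_nonneg_right (hη.mul_norm_sq_le_energy hg hQ tg hr)
    (Real.exp_pos _).le).trans hexp

lemma apply_ne_zero (hη : IsCoerciveRotation Q η c s) (hg : IsSol Q g)
    (hQ : ∀ᶠ r : ℝ in atTop, 0 ≤ (Q r).re) (tg : Tendsto (fun r : ℝ ↦ g r) atTop (𝓝 0))
    (hne : g ≠ 0) {r : ℝ} (hr : 0 ≤ r) : g r ≠ 0 := by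
  intro h₀
  have hzero : ∀ t : ℝ, r ≤ t → g t = 0 := fun t ht ↦ by
    have hJ : energy η g t ≤ 0 := by
      simpa [energy, h₀] using hη.antitoneOn_energy hg hr (hr.trans ht : 0 ≤ t) ht
    have hle := (hη.mul_norm_sq_le_energy hg hQ tg (hr.trans ht)).trans hJ
    simpa using nonpos_of_mul_nonpos_right hle (mul_pos hη.pos_left hη.pos_right)
  have hfreq : ∃ᶠ z in 𝓝[≠] (r : ℂ), g z = 0 := by
    have hmap : Tendsto (fun t : ℝ ↦ (t : ℂ)) (𝓝[>] r) (𝓝[≠] (r : ℂ)) :=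
      tendsto_nhdsWithin_iff.2 ⟨(Complex.continuous_ofReal.tendsto r).mono_left nhdsWithin_le_nhds,
        eventually_mem_nhdsWithin.mono fun t ht ↦ by simpa using (ne_of_gt ht)⟩
    refine hmap.frequently (Eventually.frequently ?_)
    filter_upwards [self_mem_nhdsWithin] with t ht using hzero t (le_of_lt ht)
  exact hne (AnalyticOnNhd.eq_of_frequently_eq (fun z _ ↦ hg.differentiable.analyticAt z)
    (fun z _ ↦ analyticAt_const) hfreq)

end IsCoerciveRotation

end energy

/-! ### WKB phases -/

/-- A scale function `h ≥ 4` whose reciprocal is integrable at infinity, with tail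
`κ r = ∫ₛ₌ᵣ^∞ 1 / h s`. -/
structure IsWKBScale (h κ : ℝ → ℝ) (R : ℝ) : Prop where
  four_le : ∀ r, R ≤ r → 4 ≤ h r
  hasDerivAt_tail : ∀ r, R ≤ r → HasDerivAt κ (-(1 / h r)) r
  tail_nonneg : ∀ r, R ≤ r → 0 ≤ κ r
  tendsto_tail : Tendsto κ atTop (𝓝 0)

/-- A WKB phase: `p` solves the Riccati equation `p² - p' = q` on `[R, ∞)` up to an error bounded by
`K`, it has the size of the scale function `h`, and it points into the right half-plane. -/
structure IsWKBPhase (q : ℂ → ℂ) (h κ : ℝ → ℝ) (R K : ℝ) (p p' : ℝ → ℂ) : Prop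
    extends IsWKBScale h κ R where
  hasDerivAt : ∀ r, R ≤ r → HasDerivAt p (p' r) r
  norm_riccati_le : ∀ r, R ≤ r → ‖p r ^ 2 - p' r - q r‖ ≤ K
  scale_le : ∀ r, R ≤ r → h r ≤ 4 * (p r).re
  norm_le : ∀ r, R ≤ r → ‖p r‖ ≤ 3 * h r
  norm_deriv_le : ∀ r, R ≤ r → ‖p' r‖ ≤ ‖p r‖

lemma complexSqrt_sq (z : ℂ) : z.sqrt ^ 2 = z := Complex.cpow_nat_inv_pow z two_ne_zero

lemma hasDerivAt_complexSqrt {z : ℂ} (hz : z ∈ slitPlane) :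
    HasDerivAt Complex.sqrt (1 / (2 * z.sqrt)) z := by
  convert! Complex.hasDerivAt_sqrt hz using 1
  rw [neg_div, Complex.cpow_neg, one_div 2, Complex.sqrt]
  field_simp

lemma re_le_re_complexSqrt_sq (z : ℂ) : z.re ≤ z.sqrt.re ^ 2 := by
  have hre := Complex.re_le_norm z
  have hnn : 0 ≤ ‖z‖ + z.re := by linarith [(abs_le.1 (Complex.abs_re_le_norm z)).1]
  rw [Complex.sqrt, Complex.cpow_inv_two_re, Real.sq_sqrt (by positivity)]
  linarith

lemma re_complexSqrt_nonneg (z : ℂ) : 0 ≤ z.sqrt.re := by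
  rw [Complex.sqrt, Complex.cpow_inv_two_re]
  exact Real.sqrt_nonneg _

lemma norm_complexSqrt_sq (z : ℂ) : ‖z.sqrt‖ ^ 2 = ‖z‖ := by rw [← norm_pow, complexSqrt_sq]

section phase

variable {q : ℂ → ℂ} {h κ : ℝ → ℝ} {R : ℝ}

/-- The WKB phase `√q + q'/(4q)`; here `q₁` stands for `q'`. -/
noncomputable def wkbPhase (q q₁ : ℂ → ℂ) (r : ℝ) : ℂ := (q r).sqrt + q₁ r / q r / 4

/-- The derivative of `wkbPhase`; here `q₁`, `q₂` stand for `q'`, `q''`. -/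
noncomputable def wkbPhaseDeriv (q q₁ q₂ : ℂ → ℂ) (r : ℝ) : ℂ :=
  q₁ r / q r * (q r).sqrt / 2 + (q₂ r / q r - (q₁ r / q r) ^ 2) / 4

lemma hasDerivAt_wkbPhase {q₁ q₂ : ℂ → ℂ} (hq : ∀ z, HasDerivAt q (q₁ z) z)
    (hq₁ : ∀ z, HasDerivAt q₁ (q₂ z) z) {r : ℝ} (hr : q r ∈ slitPlane) :
    HasDerivAt (wkbPhase q q₁) (wkbPhaseDeriv q q₁ q₂ r) r := by
  have hne := slitPlane_ne_zero hr
  have hsq := complexSqrt_sq (q r)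
  have hsne : (q r).sqrt ≠ 0 := fun h ↦ hne (by rw [← hsq, h, zero_pow two_ne_zero])
  convert! (((hasDerivAt_complexSqrt hr).comp (r : ℂ) (hq r)).add
    (((hq₁ r).div (hq r) hne).div_const 4)).comp_ofReal using 1
  rw [wkbPhaseDeriv]
  generalize (q r).sqrt = σ at *
  rw [← hsq]
  field_simp

lemma wkbPhase_riccati (q₁ q₂ : ℂ → ℂ) (r : ℝ) :
    wkbPhase q q₁ r ^ 2 - wkbPhaseDeriv q q₁ q₂ r - q r =
      5 / 16 * (q₁ r / q r) ^ 2 - q₂ r / q r / 4 := by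
  rw [wkbPhase, wkbPhaseDeriv]
  linear_combination complexSqrt_sq (q r)

lemma isWKBPhase_wkbPhase {q₁ q₂ : ℂ → ℂ} (hq : ∀ z, HasDerivAt q (q₁ z) z)
    (hq₁ : ∀ z, HasDerivAt q₁ (q₂ z) z) (hh : IsWKBScale h κ R)
    (hre : ∀ r : ℝ, R ≤ r → h r ^ 2 / 2 ≤ (q r).re) (hle : ∀ r : ℝ, R ≤ r → ‖q r‖ ≤ 2 * h r ^ 2)
    (h₁ : ∀ r : ℝ, R ≤ r → ‖q₁ r / q r‖ ≤ 1 / 8) (h₂ : ∀ r : ℝ, R ≤ r → ‖q₂ r / q r‖ ≤ 1) :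
    IsWKBPhase q h κ R 1 (wkbPhase q q₁) (wkbPhaseDeriv q q₁ q₂) := by
  have hsq₁ (r) (hr : R ≤ r) : ‖(q₁ r / q r) ^ 2‖ ≤ (1 / 8) ^ 2 := by
    rw [norm_pow]; gcongr; exact h₁ r hr
  have hsqrt_re (r) (hr : R ≤ r) : h r / 2 ≤ (q r).sqrt.re :=
    le_of_sq_le_sq (by nlinarith [re_le_re_complexSqrt_sq (q r), hre r hr, hh.four_le r hr])
      (re_complexSqrt_nonneg _)
  have hsqrt_le (r) (hr : R ≤ r) : ‖(q r).sqrt‖ ≤ 2 * h r :=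
    le_of_sq_le_sq (by nlinarith [norm_complexSqrt_sq (q r), hle r hr, hh.four_le r hr])
      (by linarith [hh.four_le r hr])
  have hdiv_le (r) (hr : R ≤ r) : ‖q₁ r / q r / 4‖ ≤ 1 / 32 := by
    rw [norm_div _ (4 : ℂ), Complex.norm_ofNat]; linarith [h₁ r hr]
  have hscale (r) (hr : R ≤ r) : h r ≤ 4 * (wkbPhase q q₁ r).re := by
    rw [wkbPhase, Complex.add_re]
    linarith [hsqrt_re r hr, (abs_le.1 (Complex.abs_re_le_norm (q₁ r / q r / 4))).1, hdiv_le r hr,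
      hh.four_le r hr]
  refine ⟨hh, fun r hr ↦ hasDerivAt_wkbPhase hq hq₁ (Or.inl ?_), fun r hr ↦ ?_, hscale,
    fun r hr ↦ ?_, fun r hr ↦ ?_⟩
  · nlinarith [hre r hr, hh.four_le r hr]
  · rw [wkbPhase_riccati]
    refine (norm_sub_le _ _).trans ?_
    rw [norm_mul, norm_div _ (4 : ℂ), Complex.norm_ofNat, norm_div (5 : ℂ), Complex.norm_ofNat,
      Complex.norm_ofNat]
    linarith [hsq₁ r hr, h₂ r hr]
  · exact (norm_add_le _ _).trans (by linarith [hsqrt_le r hr, hdiv_le r hr, hh.four_le r hr])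
  · have hfirst : ‖q₁ r / q r * (q r).sqrt / 2‖ ≤ 1 / 8 * (2 * h r) / 2 := by
      rw [norm_div _ (2 : ℂ), Complex.norm_ofNat, norm_mul]
      gcongr
      exacts [h₁ r hr, hsqrt_le r hr]
    have hsecond : ‖(q₂ r / q r - (q₁ r / q r) ^ 2) / 4‖ ≤ (1 + (1 / 8) ^ 2) / 4 := by
      rw [norm_div _ (4 : ℂ), Complex.norm_ofNat]
      gcongr
      exact (norm_sub_le _ _).trans (add_le_add (h₂ r hr) (hsq₁ r hr))
    refine (norm_add_le _ _).trans ((add_le_add hfirst hsecond).trans ?_)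
    linarith [hscale r hr, hh.four_le r hr, Complex.re_le_norm (wkbPhase q q₁ r)]

end phase

section polynomial

variable {Q : ℂ[X]}

lemma tendsto_eval_div_pow {P : ℂ[X]} {n : ℕ} (hP : P.natDegree ≤ n) :
    Tendsto (fun r : ℝ ↦ P.eval (r : ℂ) / (r : ℂ) ^ n) atTop (𝓝 (P.coeff n)) := by
  have hterm : ∀ i ∈ Finset.range (n + 1), Tendsto
      (fun r : ℝ ↦ P.coeff i * (r : ℂ) ^ i / (r : ℂ) ^ n) atTop
      (𝓝 (if i = n then P.coeff n else 0)) := by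
    intro i hi
    rw [Finset.mem_range] at hi
    split_ifs with hin
    · refine tendsto_const_nhds.congr' ?_
      filter_upwards [eventually_ne_atTop 0] with r hr
      rw [hin, mul_div_cancel_right₀ _ (pow_ne_zero _ (by exact_mod_cast hr))]
    · have hzero : Tendsto (fun r : ℝ ↦ P.coeff i * ((r ^ i / r ^ n : ℝ) : ℂ)) atTop (𝓝 0) := by
        simpa using ((Complex.continuous_ofReal.tendsto _).comp
          (tendsto_pow_div_pow_atTop_zero (𝕜 := ℝ) (by omega : i < n))).const_mul (P.coeff i)
      simpa [mul_div_assoc] using hzero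
  simpa [P.eval_eq_sum_range' (Nat.lt_succ_of_le hP), Finset.sum_div] using
    tendsto_finsetSum _ hterm

lemma norm_eval_le {n : ℕ} (hQ : Q.natDegree ≤ n) (z : ℂ) :
    ‖Q.eval z‖ ≤ (∑ i ∈ Finset.range (n + 1), ‖Q.coeff i‖) * (1 + ‖z‖ ^ n) := by
  rw [Q.eval_eq_sum_range' (Nat.lt_succ_of_le hQ), Finset.sum_mul]
  refine norm_sum_le_of_le _ fun i hi ↦ ?_
  rw [norm_mul, norm_pow]
  gcongr
  rcases le_total ‖z‖ 1 with hz | hz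
  · exact (pow_le_one₀ (norm_nonneg z) hz).trans (le_add_of_nonneg_right (by positivity))
  · exact (pow_le_pow_right₀ hz (Finset.mem_range_succ_iff.1 hi)).trans
      (le_add_of_nonneg_left zero_le_one)

lemma tendsto_re_eval_div_pow (hQ : Q.Monic) :
    Tendsto (fun r : ℝ ↦ (Q.eval (r : ℂ)).re / r ^ Q.natDegree) atTop (𝓝 1) := by
  have hre := (Complex.continuous_re.tendsto _).comp (tendsto_eval_div_pow le_rfl (P := Q))
  rw [Polynomial.coeff_natDegree, hQ.leadingCoeff, Complex.one_re] at hre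
  refine hre.congr fun r ↦ ?_
  rw [Function.comp_apply, ← Complex.ofReal_pow, Complex.div_ofReal_re]

lemma eventually_re_eval_add_nonneg (hQ : Q.Monic) (hm : Q.natDegree ≠ 0) (μ : ℂ) :
    ∀ᶠ r : ℝ in atTop, 0 ≤ (Q.eval (r : ℂ) + μ).re := by
  filter_upwards [(tendsto_re_eval_div_pow hQ).eventually_const_le (u := 1 / 2) (by norm_num),
    (tendsto_pow_atTop (α := ℝ) hm).eventually_ge_atTop (-2 * μ.re), eventually_gt_atTop 0]
    with r hr hμ hr₀
  rw [le_div_iff₀ (by positivity)] at hr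
  rw [Complex.add_re]
  linarith

lemma tendsto_eval_div_eval_of_degree_lt (hQ : Q.Monic) {P : ℂ[X]} (hP : P.degree < Q.degree) :
    Tendsto (fun r : ℝ ↦ P.eval (r : ℂ) / Q.eval (r : ℂ)) atTop (𝓝 0) := by
  have hcoeff : P.coeff Q.natDegree = 0 :=
    Polynomial.coeff_eq_zero_of_degree_lt (hP.trans_le Polynomial.degree_le_natDegree)
  have hdiv := (tendsto_eval_div_pow (Polynomial.natDegree_le_natDegree hP.le)).div
    (tendsto_eval_div_pow le_rfl (P := Q)) (by simp [hQ])
  rw [hcoeff, zero_div] at hdiv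
  refine hdiv.congr' ?_
  filter_upwards [eventually_ne_atTop 0] with r hr
  exact div_div_div_cancel_right₀ (pow_ne_zero _ (by exact_mod_cast hr)) _ _

lemma rpow_half_natCast_sq {r : ℝ} (hr : 0 ≤ r) (m : ℕ) : (r ^ ((m : ℝ) / 2)) ^ 2 = r ^ m := by
  rw [← Real.rpow_mul_natCast hr, Nat.cast_ofNat, div_mul_cancel₀ _ two_ne_zero,
    Real.rpow_natCast]

/-- The tail `∫ₛ₌ᵣ^∞ s ^ (-β)` of the scale function `s ^ β`, for `1 < β`. -/
noncomputable def rpowTail (β r : ℝ) : ℝ := r ^ (-(β - 1)) / (β - 1)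

lemma eventually_isWKBScale_rpow {β : ℝ} (hβ : 1 < β) :
    ∀ᶠ R : ℝ in atTop, IsWKBScale (fun r ↦ r ^ β) (rpowTail β) R := by
  have hβ₁ : 0 < β - 1 := sub_pos.2 hβ
  obtain ⟨T, hT⟩ := eventually_atTop.1
    ((tendsto_rpow_atTop (one_pos.trans hβ)).eventually_ge_atTop 4)
  filter_upwards [eventually_ge_atTop T, eventually_gt_atTop 0] with R hTR hR
  refine ⟨fun r hr ↦ hT r (hTR.trans hr), fun r hr ↦ ?_, fun r hr ↦ ?_, ?_⟩
  · have hr₀ : 0 < r := hR.trans_le hr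
    convert! (Real.hasDerivAt_rpow_const (p := -(β - 1)) (Or.inl hr₀.ne')).div_const (β - 1) using 1
    rw [neg_sub, sub_sub_cancel_left, Real.rpow_neg hr₀.le]
    field_simp
    ring
  · have hr₀ : 0 < r := hR.trans_le hr
    rw [rpowTail]
    positivity
  · exact zero_div (β - 1) ▸ (tendsto_rpow_neg_atTop hβ₁).div_const (β - 1)

lemma exists_isWKBPhase (hQ : Q.Monic) (hm : 3 ≤ Q.natDegree) : ∃ (R : ℝ) (p p' : ℝ → ℂ), 1 ≤ R ∧
    IsWKBPhase (fun w ↦ Q.eval w) (fun r ↦ r ^ ((Q.natDegree : ℝ) / 2))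
      (rpowTail (Q.natDegree / 2)) R 1 p p' := by
  have hβ : 1 < (Q.natDegree : ℝ) / 2 := by
    have : (3 : ℝ) ≤ Q.natDegree := by exact_mod_cast hm
    linarith
  have hlt : Q.derivative.degree < Q.degree := Polynomial.degree_derivative_lt hQ.ne_zero
  have hlog := (tendsto_eval_div_eval_of_degree_lt hQ hlt).norm
  have hlog' := (tendsto_eval_div_eval_of_degree_lt hQ
    ((Polynomial.degree_derivative_le (p := Q.derivative)).trans_lt hlt)).norm
  have hnorm := (tendsto_eval_div_pow le_rfl (P := Q)).norm
  rw [Polynomial.coeff_natDegree, hQ.leadingCoeff, norm_one] at hnorm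
  rw [norm_zero] at hlog hlog'
  obtain ⟨R, hR⟩ := eventually_atTop.1 <| (eventually_isWKBScale_rpow hβ).and <|
    ((tendsto_re_eval_div_pow hQ).eventually_const_le (u := 1 / 2) (by norm_num)).and <|
    (hnorm.eventually_le_const (u := 2) (by norm_num)).and <|
    (hlog.eventually_le_const (u := 1 / 8) (by norm_num)).and
    (hlog'.eventually_le_const (u := 1) (by norm_num))
  refine ⟨max R 1, _, _, le_max_right _ _, isWKBPhase_wkbPhase (fun z ↦ Q.hasDerivAt z)
    (fun z ↦ Q.derivative.hasDerivAt z) (hR _ (le_max_left _ _)).1 (fun r hr ↦ ?_) (fun r hr ↦ ?_)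
    (fun r hr ↦ ?_) fun r hr ↦ ?_⟩
  all_goals
    obtain ⟨-, hre, hle, h₁, h₂⟩ := hR r (le_of_max_le_left hr)
    have hr₀ : 0 < r := one_pos.trans_le (le_of_max_le_right hr)
  · rw [rpow_half_natCast_sq hr₀.le]
    rw [le_div_iff₀ (by positivity)] at hre
    linarith
  · rwa [rpow_half_natCast_sq hr₀.le, ← div_le_iff₀ (by positivity),
      ← Real.norm_of_nonneg (pow_nonneg hr₀.le _), norm_pow, ← Complex.norm_real, ← norm_pow,
      ← norm_div]
  · exact h₁
  · exact h₂

end polynomial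

/-! ### WKB amplitudes -/

/-- The decaying WKB factor `exp (-∫ p)`. The integrand is frozen to the left of `R`, so that the
factor is differentiable at `R` itself. -/
noncomputable def wkbFactor (p : ℝ → ℂ) (R r : ℝ) : ℂ :=
  Complex.exp (-∫ s in R..r, p (max s R))

/-- The coefficient `B` in the decomposition `G = φ (A + B)`, `G' = φ p (B - A)` of a solution,
where `φ = wkbFactor p R`. -/
noncomputable def growingAmplitude (p : ℝ → ℂ) (R : ℝ) (G : ℂ → ℂ) (r : ℝ) : ℂ :=
  (deriv G r + p r * G r) / (2 * p r * wkbFactor p R r)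

/-- The coefficient `A` in the decomposition `G = φ (A + B)`, `G' = φ p (B - A)` of a solution,
where `φ = wkbFactor p R`. -/
noncomputable def decayingAmplitude (p : ℝ → ℂ) (R : ℝ) (G : ℂ → ℂ) (r : ℝ) : ℂ :=
  G r / wkbFactor p R r - growingAmplitude p R G r

/-- The perturbation `X` in the amplitude equations `A' = X`, `B' = 2 p B - X` of a solution of
`G'' = q G`. -/
noncomputable def amplitudeForcing (q : ℂ → ℂ) (p p' : ℝ → ℂ) (R : ℝ) (G : ℂ → ℂ) (r : ℝ) : ℂ :=
  (p r ^ 2 - p' r - q r) * (decayingAmplitude p R G r + growingAmplitude p R G r) / (2 * p r) +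
    growingAmplitude p R G r * (p' r / p r)

/-- The size of the amplitudes `A`, `B` of `G` relative to the pure WKB solution with `A = t`,
`B = 0`. The term `‖t‖²` absorbs the forcing by the reference solution. -/
noncomputable def amplitudeEnergy (p : ℝ → ℂ) (R : ℝ) (G : ℂ → ℂ) (t : ℂ) (r : ℝ) : ℝ :=
  ‖decayingAmplitude p R G r - t‖ ^ 2 + ‖growingAmplitude p R G r‖ ^ 2 + ‖t‖ ^ 2

lemma amplitudeEnergy_nonneg (p : ℝ → ℂ) (R : ℝ) (G : ℂ → ℂ) (t : ℂ) (r : ℝ) :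
    0 ≤ amplitudeEnergy p R G t r := by
  rw [amplitudeEnergy]; positivity

lemma wkbFactor_ne_zero (p : ℝ → ℂ) (R r : ℝ) : wkbFactor p R r ≠ 0 := Complex.exp_ne_zero _

lemma eq_wkbFactor_mul (p : ℝ → ℂ) (R : ℝ) (G : ℂ → ℂ) (r : ℝ) :
    G r = wkbFactor p R r * (decayingAmplitude p R G r + growingAmplitude p R G r) := by
  rw [decayingAmplitude, sub_add_cancel, mul_div_cancel₀ _ (wkbFactor_ne_zero p R r)]

lemma neg_mul_sum_sq_le_of_le_add {a b t n x P : ℝ} (ha : 0 ≤ a) (hb : 0 ≤ b) (hn : 0 ≤ n)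
    (hP : 1 ≤ P) (hx : x ≤ (a + b + t) * n / 2 + b) :
    -((1 / P + 3 * n) * (a ^ 2 + b ^ 2 + t ^ 2)) ≤ 4 * P * b ^ 2 - 2 * (a + b) * x := by
  have hcross : 2 * a * b ≤ P * b ^ 2 + 1 / P * a ^ 2 := by
    have hsq : P * (b - a / P) ^ 2 = P * b ^ 2 + 1 / P * a ^ 2 - 2 * a * b := by
      field_simp
      ring
    have : 0 ≤ P * (b - a / P) ^ 2 := by positivity
    linarith
  have hforce : (a + b) * (a + b + t) * n ≤ 3 * (a ^ 2 + b ^ 2 + t ^ 2) * n :=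
    mul_le_mul_of_nonneg_right
      (by nlinarith [sq_nonneg (a - b), sq_nonneg (a + b - t), sq_nonneg t]) hn
  have hmul := mul_le_mul_of_nonneg_left hx (show 0 ≤ 2 * (a + b) by positivity)
  have hrest : 0 ≤ 1 / P * (b ^ 2 + t ^ 2) := by positivity
  nlinarith [mul_nonneg (sub_nonneg.2 hP) (sq_nonneg b)]

namespace IsWKBPhase

variable {q : ℂ → ℂ} {h κ : ℝ → ℝ} {R K : ℝ} {p p' : ℝ → ℂ} {G : ℂ → ℂ}

lemma add_const (H : IsWKBPhase q h κ R K p p') {μ : ℂ} {ρ : ℝ} (hμ : ‖μ‖ ≤ ρ) :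
    IsWKBPhase (fun w ↦ q w + μ) h κ R (K + ρ) p p' where
  toIsWKBScale := H.toIsWKBScale
  hasDerivAt := H.hasDerivAt
  norm_riccati_le r hr := by
    rw [← sub_sub]
    exact (norm_sub_le _ _).trans (add_le_add (H.norm_riccati_le r hr) hμ)
  scale_le := H.scale_le
  norm_le := H.norm_le
  norm_deriv_le := H.norm_deriv_le

lemma one_le_re (H : IsWKBPhase q h κ R K p p') {r : ℝ} (hr : R ≤ r) : 1 ≤ (p r).re := by
  linarith [H.four_le r hr, H.scale_le r hr]

lemma one_le_norm (H : IsWKBPhase q h κ R K p p') {r : ℝ} (hr : R ≤ r) : 1 ≤ ‖p r‖ :=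
  (H.one_le_re hr).trans (Complex.re_le_norm _)

lemma ne_zero (H : IsWKBPhase q h κ R K p p') {r : ℝ} (hr : R ≤ r) : p r ≠ 0 :=
  norm_pos_iff.1 (one_pos.trans_le (H.one_le_norm hr))

lemma const_nonneg (H : IsWKBPhase q h κ R K p p') : 0 ≤ K :=
  (norm_nonneg _).trans (H.norm_riccati_le R le_rfl)

lemma hasDerivAt_wkbFactor (H : IsWKBPhase q h κ R K p p') {r : ℝ} (hr : R ≤ r) :
    HasDerivAt (wkbFactor p R) (-p r * wkbFactor p R r) r := by
  have hcont : Continuous fun r ↦ p (max r R) := continuous_iff_continuousAt.2 fun r ↦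
    ContinuousAt.comp (f := fun r ↦ max r R) (g := p)
      (H.hasDerivAt _ (le_max_right _ _)).continuousAt (by fun_prop)
  have hint := intervalIntegral.integral_hasDerivAt_right (hcont.intervalIntegrable R r)
    (hcont.stronglyMeasurableAtFilter _ _) hcont.continuousAt
  rw [max_eq_left hr] at hint
  rw [mul_comm]
  exact hint.neg.cexp

lemma norm_wkbFactor_le (H : IsWKBPhase q h κ R K p p') {r : ℝ} (hr : R ≤ r) :
    ‖wkbFactor p R r‖ ≤ Real.exp (R - r) := by
  have hR : ‖wkbFactor p R R‖ = 1 := by simp [wkbFactor]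
  have hE (x : ℝ) : HasDerivAt (fun x ↦ 2 * x) 2 x := by
    simpa using (hasDerivAt_id x).const_mul (2 : ℝ)
  have hmono := le_mul_exp_sub_of_deriv_nonneg hr
    (fun x hx ↦ (hasDerivAt_norm_sq (H.hasDerivAt_wkbFactor hx.1)).neg) (fun x _ ↦ hE x)
    fun x hx ↦ by
      rw [Pi.neg_apply, re_conj_mul_mul_self, Complex.neg_re]
      nlinarith [mul_nonneg (sub_nonneg.2 (H.one_le_re hx.1)) (sq_nonneg ‖wkbFactor p R x‖)]
  rw [Pi.neg_apply, Pi.neg_apply, hR, neg_mul, neg_le_neg_iff, one_pow] at hmono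
  refine (pow_le_pow_iff_left₀ (norm_nonneg _) (Real.exp_pos _).le two_ne_zero).1 ?_
  rw [← le_div_iff₀ (Real.exp_pos _), one_div, ← Real.exp_neg] at hmono
  rw [← Real.exp_nat_mul]
  convert hmono using 2
  push_cast
  ring

lemma norm_wkbFactor_le_one (H : IsWKBPhase q h κ R K p p') {r : ℝ} (hr : R ≤ r) :
    ‖wkbFactor p R r‖ ≤ 1 :=
  (H.norm_wkbFactor_le hr).trans (Real.exp_le_one_iff.2 (by linarith))

lemma tendsto_wkbFactor (H : IsWKBPhase q h κ R K p p') :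
    Tendsto (wkbFactor p R) atTop (𝓝 0) := by
  refine squeeze_zero_norm' ((eventually_ge_atTop R).mono fun r ↦ H.norm_wkbFactor_le) ?_
  exact Real.tendsto_exp_atBot.comp (tendsto_atBot_add_const_left _ R tendsto_neg_atTop_atBot)

lemma deriv_eq_wkbFactor_mul (H : IsWKBPhase q h κ R K p p') (G : ℂ → ℂ) {r : ℝ} (hr : R ≤ r) :
    deriv G r = wkbFactor p R r * p r *
      (growingAmplitude p R G r - decayingAmplitude p R G r) := by
  have := H.ne_zero hr
  have := wkbFactor_ne_zero p R r
  rw [decayingAmplitude, growingAmplitude]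
  field_simp
  ring

lemma hasDerivAt_growingAmplitude (H : IsWKBPhase q h κ R K p p') (hG : IsSol q G) {r : ℝ}
    (hr : R ≤ r) : HasDerivAt (growingAmplitude p R G) (2 * p r * growingAmplitude p R G r -
      amplitudeForcing q p p' R G r) r := by
  have hp := H.ne_zero hr
  have hφ := wkbFactor_ne_zero p R r
  convert! ((hG.hasDerivAt_deriv_ofReal r).add
    ((H.hasDerivAt r hr).mul (hG.hasDerivAt_ofReal r))).div
    (((H.hasDerivAt r hr).const_mul 2).mul (H.hasDerivAt_wkbFactor hr))
    (mul_ne_zero (mul_ne_zero two_ne_zero hp) hφ) using 1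
  rw [amplitudeForcing, decayingAmplitude, growingAmplitude, Pi.add_apply, Pi.mul_apply,
    Pi.mul_apply]
  field_simp
  ring

lemma hasDerivAt_decayingAmplitude (H : IsWKBPhase q h κ R K p p') (hG : IsSol q G) {r : ℝ}
    (hr : R ≤ r) : HasDerivAt (decayingAmplitude p R G) (amplitudeForcing q p p' R G r) r := by
  have hp := H.ne_zero hr
  have hφ := wkbFactor_ne_zero p R r
  convert! ((hG.hasDerivAt_ofReal r).div (H.hasDerivAt_wkbFactor hr) hφ).sub
    (H.hasDerivAt_growingAmplitude hG hr) using 1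
  rw [amplitudeForcing, decayingAmplitude, growingAmplitude]
  field_simp
  ring

lemma norm_amplitudeForcing_le (H : IsWKBPhase q h κ R K p p') (G : ℂ → ℂ) (t : ℂ) {r : ℝ}
    (hr : R ≤ r) : ‖amplitudeForcing q p p' R G r‖ ≤
      (‖decayingAmplitude p R G r - t‖ + ‖growingAmplitude p R G r‖ + ‖t‖) * (4 * K / h r) / 2 +
        ‖growingAmplitude p R G r‖ := by
  set A := decayingAmplitude p R G r
  set B := growingAmplitude p R G r
  have hp := H.one_le_norm hr
  have hh := H.four_le r hr
  have hquot : ‖p r ^ 2 - p' r - q r‖ / ‖p r‖ ≤ 4 * K / h r := by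
    rw [div_le_div_iff₀ (by linarith) (by linarith)]
    calc ‖p r ^ 2 - p' r - q r‖ * h r ≤ K * (4 * ‖p r‖) :=
          mul_le_mul (H.norm_riccati_le r hr) (by linarith [H.scale_le r hr, re_le_norm (p r)])
            (by linarith) H.const_nonneg
      _ = 4 * K * ‖p r‖ := by ring
  have hsum : ‖A + B‖ ≤ ‖A - t‖ + ‖B‖ + ‖t‖ := by
    calc ‖A + B‖ = ‖A - t + B + t‖ := by rw [add_right_comm, sub_add_cancel]
      _ ≤ ‖A - t‖ + ‖B‖ + ‖t‖ := norm_add₃_le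
  refine (norm_add_le _ _).trans (add_le_add ?_ ?_)
  · calc ‖(p r ^ 2 - p' r - q r) * (A + B) / (2 * p r)‖
        = ‖A + B‖ * (‖p r ^ 2 - p' r - q r‖ / ‖p r‖) / 2 := by
          rw [norm_div, norm_mul, norm_mul, Complex.norm_two]
          ring
      _ ≤ _ := by gcongr
  · rw [norm_mul, norm_div]
    exact mul_le_of_le_one_right (norm_nonneg _)
      ((div_le_one (by linarith)).2 (H.norm_deriv_le r hr))

lemma hasDerivAt_amplitudeEnergy (H : IsWKBPhase q h κ R K p p') (hG : IsSol q G) (t : ℂ) {r : ℝ}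
    (hr : R ≤ r) : HasDerivAt (amplitudeEnergy p R G t)
      (2 * (starRingEnd ℂ (decayingAmplitude p R G r - t) * amplitudeForcing q p p' R G r).re +
        2 * (starRingEnd ℂ (growingAmplitude p R G r) *
          (2 * p r * growingAmplitude p R G r - amplitudeForcing q p p' R G r)).re) r :=
  ((hasDerivAt_norm_sq ((H.hasDerivAt_decayingAmplitude hG hr).sub_const t)).add
    (hasDerivAt_norm_sq (H.hasDerivAt_growingAmplitude hG hr))).add_const _

lemma neg_mul_amplitudeEnergy_le_deriv (H : IsWKBPhase q h κ R K p p') (hG : IsSol q G) (t : ℂ)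
    {r : ℝ} (hr : R ≤ r) :
    -((4 + 12 * K) / h r * amplitudeEnergy p R G t r) ≤ deriv (amplitudeEnergy p R G t) r := by
  have hmain := neg_mul_sum_sq_le_of_le_add (norm_nonneg _) (norm_nonneg _)
    (div_nonneg (mul_nonneg zero_le_four H.const_nonneg) (by linarith [H.four_le r hr]))
    (H.one_le_re hr) (H.norm_amplitudeForcing_le G t hr)
  have hrate : 1 / (p r).re + 3 * (4 * K / h r) ≤ (4 + 12 * K) / h r := by
    have : 1 / (p r).re ≤ 4 / h r := by
      rw [div_le_div_iff₀ (by linarith [H.one_le_re hr]) (by linarith [H.four_le r hr])]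
      linarith [H.scale_le r hr]
    calc _ ≤ 4 / h r + 3 * (4 * K / h r) := by gcongr
      _ = (4 + 12 * K) / h r := by ring
  have henergy := mul_le_mul_of_nonneg_right hrate (amplitudeEnergy_nonneg p R G t r)
  rw [(H.hasDerivAt_amplitudeEnergy hG t hr).deriv, mul_sub, Complex.sub_re,
    re_conj_mul_mul_self, show (2 * p r).re = 2 * (p r).re by simp]
  have hA := (abs_le.1 (abs_re_conj_mul_le (decayingAmplitude p R G r - t)
    (amplitudeForcing q p p' R G r))).1
  have hB := (abs_le.1 (abs_re_conj_mul_le (growingAmplitude p R G r)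
    (amplitudeForcing q p p' R G r))).2
  rw [amplitudeEnergy] at henergy ⊢
  linarith

lemma amplitudeEnergy_le (H : IsWKBPhase q h κ R K p p') (hG : IsSol q G) (t : ℂ) {r N : ℝ}
    (hr : R ≤ r) (hrN : r ≤ N) : amplitudeEnergy p R G t r ≤
      amplitudeEnergy p R G t N * Real.exp ((4 + 12 * K) * (κ r - κ N)) := by
  convert le_mul_exp_sub_of_deriv_nonneg hrN
    (fun x hx ↦ (H.hasDerivAt_amplitudeEnergy hG t (hr.trans hx.1)).differentiableAt.hasDerivAt)
    (fun x hx ↦ (H.hasDerivAt_tail x (hr.trans hx.1)).const_mul (-(4 + 12 * K)))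
    (fun x hx ↦ ?_) using 3
  · ring
  · linear_combination H.neg_mul_amplitudeEnergy_le_deriv hG t (hr.trans hx.1)

lemma norm_deriv_sq_add_norm_sq_le (H : IsWKBPhase q h κ R K p p') (hG : IsSol q G) {r M : ℝ}
    (hR : 0 ≤ R) (hr : R ≤ r) (hM : 1 ≤ M) (hq : ∀ x ∈ Icc 0 r, ‖q x‖ ≤ M ^ 2) {x : ℝ}
    (hx : x ∈ Icc 0 r) : ‖deriv G x‖ ^ 2 + ‖G x‖ ^ 2 ≤
      2 * (‖p r‖ ^ 2 + M ^ 2) * amplitudeEnergy p R G 0 r * Real.exp (2 * M * r) := by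
  have hgron := hG.norm_sq_le_mul_exp (zero_le_one.trans hM) hx.2
    fun y hy ↦ hq y ⟨hx.1.trans hy.1, hy.2⟩
  set A := decayingAmplitude p R G r with hA
  set B := growingAmplitude p R G r with hB
  have hE : amplitudeEnergy p R G 0 r = ‖A‖ ^ 2 + ‖B‖ ^ 2 := by simp [amplitudeEnergy, hA, hB]
  have hφ := H.norm_wkbFactor_le_one hr
  have hsq : (‖A‖ + ‖B‖) ^ 2 ≤ 2 * (‖A‖ ^ 2 + ‖B‖ ^ 2) := by nlinarith [sq_nonneg (‖A‖ - ‖B‖)]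
  have hval : ‖G r‖ ≤ ‖A‖ + ‖B‖ := by
    rw [eq_wkbFactor_mul p R G r, norm_mul]
    exact (mul_le_of_le_one_left (norm_nonneg _) hφ).trans (norm_add_le _ _)
  have hder : ‖deriv G r‖ ≤ ‖p r‖ * (‖A‖ + ‖B‖) := by
    rw [H.deriv_eq_wkbFactor_mul G hr, norm_mul, norm_mul, add_comm ‖A‖]
    exact mul_le_mul (mul_le_of_le_one_left (norm_nonneg _) hφ) (norm_sub_le _ _)
      (norm_nonneg _) (norm_nonneg _)
  have : 0 ≤ r := hR.trans hr
  have hM₂ : 1 ≤ M ^ 2 := one_le_pow₀ hM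
  rw [hE]
  calc ‖deriv G x‖ ^ 2 + ‖G x‖ ^ 2 ≤ ‖deriv G x‖ ^ 2 + M ^ 2 * ‖G x‖ ^ 2 := by
        nlinarith [sq_nonneg ‖G x‖]
    _ ≤ (‖deriv G r‖ ^ 2 + M ^ 2 * ‖G r‖ ^ 2) * Real.exp (2 * M * r - 2 * M * x) := hgron
    _ ≤ ((‖p r‖ * (‖A‖ + ‖B‖)) ^ 2 + M ^ 2 * (‖A‖ + ‖B‖) ^ 2) * Real.exp (2 * M * r) := by
        gcongr
        nlinarith [hx.1]
    _ = (‖p r‖ ^ 2 + M ^ 2) * (‖A‖ + ‖B‖) ^ 2 * Real.exp (2 * M * r) := by ring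
    _ ≤ (‖p r‖ ^ 2 + M ^ 2) * (2 * (‖A‖ ^ 2 + ‖B‖ ^ 2)) * Real.exp (2 * M * r) := by gcongr
    _ = _ := by ring

end IsWKBPhase

/-! ### Subdominant solutions -/

section linearity

lemma odeCoeff_eq_add {𝕜 : Type*} [Field 𝕜] (q : ℕ → 𝕜) (x y : 𝕜) (n : ℕ) :
    odeCoeff q x y n = x * odeCoeff q 1 0 n + y * odeCoeff q 0 1 n := by
  induction n using Nat.strong_induction_on with
  | _ n ih =>
    match n with
    | 0 => simp [odeCoeff]
    | 1 => simp [odeCoeff]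
    | n + 2 =>
      simp only [odeCoeff]
      rw [← mul_div_assoc, ← mul_div_assoc, ← add_div, Finset.mul_sum, Finset.mul_sum,
        ← Finset.sum_add_distrib]
      congr 1
      refine Finset.sum_congr rfl fun i _ ↦ ?_
      rw [ih (n - i) (by omega)]
      ring

variable (Q : ℂ[X]) (x y μ w : ℂ)

lemma odeSol_eq_add : odeSol Q x y μ w = x * odeSol Q 1 0 μ w + y * odeSol Q 0 1 μ w := by
  have hsum (a b : ℂ) := (isEntireCoeff_odeCoeff (Q + Polynomial.C μ) a b).summable_norm w
  rw [odeSol, odeSol, odeSol, ← tsum_mul_left, ← tsum_mul_left,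
    ← ((hsum 1 0).of_norm.mul_left x).tsum_add ((hsum 0 1).of_norm.mul_left y)]
  refine tsum_congr fun n ↦ ?_
  rw [odeCoeff_eq_add]
  ring

lemma deriv_odeSol_eq_add :
    deriv (odeSol Q x y μ) w = x * deriv (odeSol Q 1 0 μ) w + y * deriv (odeSol Q 0 1 μ) w := by
  have hd (a b : ℂ) := (isSol_odeSol Q a b μ).differentiable w
  have heq : odeSol Q x y μ = fun w ↦ x * odeSol Q 1 0 μ w + y * odeSol Q 0 1 μ w :=
    funext (odeSol_eq_add Q x y μ)
  rw [heq]
  exact (((hd 1 0).hasDerivAt.const_mul x).add ((hd 0 1).hasDerivAt.const_mul y)).deriv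

lemma wronskian_odeSol : wronskian (odeSol Q 1 0 μ) (odeSol Q 0 1 μ) w = 1 := by
  rw [(isSol_odeSol Q 1 0 μ).wronskian_eq (isSol_odeSol Q 0 1 μ) w 0]
  simp [wronskian]

variable {Q}

lemma exists_odeSol_eq (a b : ℂ) : ∃ X Y : ℂ → ℂ, Differentiable ℂ X ∧ Differentiable ℂ Y ∧
    ∀ μ, odeSol Q (X μ) (Y μ) μ w = a ∧ deriv (odeSol Q (X μ) (Y μ) μ) w = b := by
  have hd (x y : ℂ) := differentiable_odeSol_param Q x y w
  have hd' (x y : ℂ) := differentiable_deriv_odeSol_param Q x y w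
  refine ⟨fun μ ↦ a * deriv (odeSol Q 0 1 μ) w - b * odeSol Q 0 1 μ w,
    fun μ ↦ b * odeSol Q 1 0 μ w - a * deriv (odeSol Q 1 0 μ) w,
    ((hd' 0 1).const_mul a).sub ((hd 0 1).const_mul b),
    ((hd 1 0).const_mul b).sub ((hd' 1 0).const_mul a), fun μ ↦ ?_⟩
  have hW := wronskian_odeSol Q μ w
  rw [wronskian] at hW
  rw [odeSol_eq_add, deriv_odeSol_eq_add]
  constructor
  · linear_combination a * hW
  · linear_combination b * hW

end linearity

/-- The solution `G` matches the pure decaying WKB solution at `N`: its amplitudes are `A = 1` and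
`B = 0`. -/
structure IsPureDecayingAt (p : ℝ → ℂ) (R : ℝ) (G : ℂ → ℂ) (N : ℝ) : Prop where
  decaying_eq_one : decayingAmplitude p R G N = 1
  growing_eq_zero : growingAmplitude p R G N = 0

section amplitudes

variable {p p' : ℝ → ℂ} {R K r N N₁ N₂ M : ℝ} {G G₁ G₂ : ℂ → ℂ} {t : ℂ} {q : ℂ → ℂ} {h κ : ℝ → ℝ}

lemma IsPureDecayingAt.of_eq (hG : G N = wkbFactor p R N)
    (hG' : deriv G N = -p N * wkbFactor p R N) : IsPureDecayingAt p R G N := by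
  have hB : growingAmplitude p R G N = 0 := by simp [growingAmplitude, hG, hG']
  refine ⟨?_, hB⟩
  rw [decayingAmplitude, hB, hG, sub_zero, div_self (wkbFactor_ne_zero p R N)]

lemma IsPureDecayingAt.amplitudeEnergy_eq_one (hG : IsPureDecayingAt p R G N) :
    amplitudeEnergy p R G 1 N = 1 := by
  simp [amplitudeEnergy, hG.decaying_eq_one, hG.growing_eq_zero]

lemma growingAmplitude_sub (hG₁ : Differentiable ℂ G₁) (hG₂ : Differentiable ℂ G₂) :
    growingAmplitude p R (G₂ - G₁) r = growingAmplitude p R G₂ r - growingAmplitude p R G₁ r := by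
  rw [growingAmplitude, deriv_sub (hG₂ _) (hG₁ _), Pi.sub_apply, growingAmplitude, growingAmplitude]
  ring

lemma decayingAmplitude_sub (hG₁ : Differentiable ℂ G₁) (hG₂ : Differentiable ℂ G₂) :
    decayingAmplitude p R (G₂ - G₁) r =
      decayingAmplitude p R G₂ r - decayingAmplitude p R G₁ r := by
  rw [decayingAmplitude, growingAmplitude_sub hG₁ hG₂, Pi.sub_apply, decayingAmplitude,
    decayingAmplitude]
  ring

lemma IsPureDecayingAt.amplitudeEnergy_sub (hG : IsPureDecayingAt p R G₁ N)
    (hG₁ : Differentiable ℂ G₁) (hG₂ : Differentiable ℂ G₂) :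
    amplitudeEnergy p R (G₂ - G₁) 0 N = amplitudeEnergy p R G₂ 1 N - 1 := by
  rw [amplitudeEnergy, amplitudeEnergy, decayingAmplitude_sub hG₁ hG₂,
    growingAmplitude_sub hG₁ hG₂, hG.decaying_eq_one, hG.growing_eq_zero]
  simp

lemma tendsto_amplitudeEnergy {ι : Type*} {l : Filter ι} {F : ι → ℂ → ℂ}
    (hF : Tendsto (fun i ↦ F i r) l (𝓝 (G r)))
    (hF' : Tendsto (fun i ↦ deriv (F i) r) l (𝓝 (deriv G r))) :
    Tendsto (fun i ↦ amplitudeEnergy p R (F i) t r) l (𝓝 (amplitudeEnergy p R G t r)) := by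
  have hB : Tendsto (fun i ↦ growingAmplitude p R (F i) r) l (𝓝 (growingAmplitude p R G r)) :=
    (hF'.add (hF.const_mul _)).div_const _
  have hA : Tendsto (fun i ↦ decayingAmplitude p R (F i) r) l (𝓝 (decayingAmplitude p R G r)) :=
    (hF.div_const _).sub hB
  exact (((hA.sub_const t).norm.pow 2).add (hB.norm.pow 2)).add_const _

lemma amplitudeEnergy_zero_le : amplitudeEnergy p R G 0 r ≤ 2 * amplitudeEnergy p R G t r := by
  have htri : ‖decayingAmplitude p R G r‖ ≤ ‖decayingAmplitude p R G r - t‖ + ‖t‖ :=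
    norm_le_norm_sub_add _ _
  have hsq := pow_le_pow_left₀ (norm_nonneg _) htri 2
  rw [amplitudeEnergy, amplitudeEnergy, sub_zero, norm_zero]
  nlinarith [sq_nonneg (‖decayingAmplitude p R G r - t‖ - ‖t‖),
    sq_nonneg ‖growingAmplitude p R G r‖]

lemma norm_sq_le_amplitudeEnergy :
    ‖G r‖ ^ 2 ≤ 2 * ‖wkbFactor p R r‖ ^ 2 * amplitudeEnergy p R G 0 r := by
  rw [eq_wkbFactor_mul p R G r, norm_mul, mul_pow, mul_comm 2, mul_assoc]
  gcongr
  have hsq := pow_le_pow_left₀ (norm_nonneg _)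
    (norm_add_le (decayingAmplitude p R G r) (growingAmplitude p R G r)) 2
  rw [amplitudeEnergy, sub_zero, norm_zero]
  nlinarith [sq_nonneg (‖decayingAmplitude p R G r‖ - ‖growingAmplitude p R G r‖)]

namespace IsWKBPhase

lemma amplitudeEnergy_le_exp (H : IsWKBPhase q h κ R K p p') (hG : IsSol q G)
    (hN : IsPureDecayingAt p R G N) (hr : R ≤ r) (hrN : r ≤ N) :
    amplitudeEnergy p R G 1 r ≤ Real.exp ((4 + 12 * K) * κ r) := by
  refine (H.amplitudeEnergy_le hG 1 hr hrN).trans ?_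
  rw [hN.amplitudeEnergy_eq_one, one_mul, Real.exp_le_exp]
  exact mul_le_mul_of_nonneg_left (sub_le_self _ (H.tail_nonneg N (hr.trans hrN)))
    (by linarith [H.const_nonneg])

lemma norm_sub_apply_zero_le (H : IsWKBPhase q h κ R K p p') (hR : 0 ≤ R) (hM : 1 ≤ M)
    (hq : ∀ x ∈ Icc 0 R, ‖q x‖ ≤ M ^ 2) (hG₁ : IsSol q G₁) (hG₂ : IsSol q G₂)
    (hN₁ : IsPureDecayingAt p R G₁ N₁) (hN₂ : IsPureDecayingAt p R G₂ N₂) (hRN : R ≤ N₁)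
    (hN : N₁ ≤ N₂) : ‖deriv G₂ 0 - deriv G₁ 0‖ ^ 2 + ‖G₂ 0 - G₁ 0‖ ^ 2 ≤
      2 * (‖p R‖ ^ 2 + M ^ 2) * Real.exp ((4 + 12 * K) * κ R) * Real.exp (2 * M * R) *
        (Real.exp ((4 + 12 * K) * κ N₁) - 1) := by
  have hK := H.const_nonneg
  have hsol : IsSol q (G₂ - G₁) := hG₂.sub hG₁
  have hE₁ : amplitudeEnergy p R (G₂ - G₁) 0 N₁ ≤ Real.exp ((4 + 12 * K) * κ N₁) - 1 := by
    rw [hN₁.amplitudeEnergy_sub hG₁.differentiable hG₂.differentiable]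
    exact sub_le_sub_right (H.amplitudeEnergy_le_exp hG₂ hN₂ hRN hN) 1
  have hE := (H.amplitudeEnergy_le hsol 0 le_rfl hRN).trans <| mul_le_mul hE₁
    (Real.exp_le_exp.2 (mul_le_mul_of_nonneg_left (sub_le_self _ (H.tail_nonneg N₁ hRN))
      (by positivity))) (Real.exp_pos _).le
    (sub_nonneg.2 (Real.one_le_exp (mul_nonneg (by positivity) (H.tail_nonneg N₁ hRN))))
  have hzero := H.norm_deriv_sq_add_norm_sq_le hsol hR le_rfl hM hq (left_mem_Icc.2 hR)
  rw [Complex.ofReal_zero, deriv_sub (hG₂.differentiable _) (hG₁.differentiable _)] at hzero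
  refine hzero.trans ?_
  calc 2 * (‖p R‖ ^ 2 + M ^ 2) * amplitudeEnergy p R (G₂ - G₁) 0 R * Real.exp (2 * M * R)
      ≤ 2 * (‖p R‖ ^ 2 + M ^ 2) * ((Real.exp ((4 + 12 * K) * κ N₁) - 1) *
          Real.exp ((4 + 12 * K) * κ R)) * Real.exp (2 * M * R) := by gcongr
    _ = _ := by ring

lemma tendsto_exp_mul_tail (H : IsWKBPhase q h κ R K p p') (c : ℝ) :
    Tendsto (fun r ↦ Real.exp (c * κ r)) atTop (𝓝 1) := by
  simpa using (H.tendsto_tail.const_mul c).rexp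

lemma tendsto_zero_of_amplitudeEnergy_le (H : IsWKBPhase q h κ R K p p') {c : ℝ}
    (hG : ∀ r, R ≤ r → amplitudeEnergy p R G 1 r ≤ Real.exp (c * κ r)) :
    Tendsto (fun r : ℝ ↦ G r) atTop (𝓝 0) := by
  have hlim : Tendsto (fun r ↦ 2 * ‖wkbFactor p R r‖ ^ 2 * (2 * Real.exp (c * κ r))) atTop
      (𝓝 0) := by
    simpa using ((H.tendsto_wkbFactor.norm.pow 2).const_mul 2).mul
      ((H.tendsto_exp_mul_tail c).const_mul 2)
  have hsq : Tendsto (fun r : ℝ ↦ ‖G r‖ ^ 2) atTop (𝓝 0) := by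
    refine squeeze_zero' (.of_forall fun _ ↦ by positivity) ?_ hlim
    filter_upwards [eventually_ge_atTop R] with r hr
    refine (norm_sq_le_amplitudeEnergy (p := p) (R := R)).trans ?_
    gcongr
    exact amplitudeEnergy_zero_le.trans (by gcongr; exact hG r hr)
  simpa [tendsto_zero_iff_norm_tendsto_zero, Real.sqrt_sq] using hsq.sqrt

lemma ne_zero_of_amplitudeEnergy_le (H : IsWKBPhase q h κ R K p p') {c : ℝ}
    (hG : ∀ r, R ≤ r → amplitudeEnergy p R G 1 r ≤ Real.exp (c * κ r)) : G ≠ 0 := by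
  rintro rfl
  obtain ⟨r, hlt, hr⟩ := (((H.tendsto_exp_mul_tail c).eventually_lt_const one_lt_two).and
    (eventually_ge_atTop R)).exists
  have hzero : amplitudeEnergy p R 0 1 r = 2 := by
    have hd : deriv (0 : ℂ → ℂ) r = 0 := deriv_const _ 0
    norm_num [amplitudeEnergy, decayingAmplitude, growingAmplitude, hd]
  linarith [hG r hr]

end IsWKBPhase

end amplitudes

lemma exists_differentiable_tendsto {X : ℕ → ℂ → ℂ} (hX : ∀ n, Differentiable ℂ (X n))
    (hc : ∀ ρ : ℝ, ∃ e : ℕ → ℝ, Tendsto e atTop (𝓝 0) ∧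
      ∀ μ, ‖μ‖ ≤ ρ → ∀ n k, n ≤ k → ‖X k μ - X n μ‖ ≤ e n) :
    ∃ Y, Differentiable ℂ Y ∧ ∀ μ, Tendsto (fun n ↦ X n μ) atTop (𝓝 (Y μ)) := by
  have hlim (μ : ℂ) : ∃ y, Tendsto (fun n ↦ X n μ) atTop (𝓝 y) := by
    obtain ⟨e, he, hXe⟩ := hc ‖μ‖
    refine cauchySeq_tendsto_of_complete (cauchySeq_of_le_tendsto_0' e (fun n k hnk ↦ ?_) he)
    rw [dist_comm, dist_eq_norm]
    exact hXe μ le_rfl n k hnk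
  choose Y hY using hlim
  refine ⟨Y, ?_, hY⟩
  have hunif : TendstoLocallyUniformlyOn X Y atTop univ := by
    rw [tendstoLocallyUniformlyOn_iff_forall_isCompact isOpen_univ]
    intro s _ hs
    obtain ⟨ρ, hρ⟩ := hs.isBounded.exists_norm_le
    obtain ⟨e, he, hXe⟩ := hc ρ
    rw [Metric.tendstoUniformlyOn_iff]
    intro ε hε
    filter_upwards [he.eventually_lt_const hε] with n hn μ hμ
    refine lt_of_le_of_lt ?_ hn
    rw [dist_eq_norm]
    refine le_of_tendsto ((hY μ).sub_const (X n μ)).norm ?_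
    filter_upwards [eventually_ge_atTop n] with k hk using hXe μ (hρ μ hμ) n k hk
  exact differentiableOn_univ.1 <| hunif.differentiableOn
    (.of_forall fun n ↦ (hX n).differentiableOn) isOpen_univ

section limit

variable {Q : ℂ[X]} {h κ : ℝ → ℝ} {R K : ℝ} {p p' : ℝ → ℂ}

lemma exists_isPureDecayingAt (Q : ℂ[X]) (p : ℝ → ℂ) (R N : ℝ) :
    ∃ X Y, Differentiable ℂ X ∧ Differentiable ℂ Y ∧
      ∀ μ, IsPureDecayingAt p R (odeSol Q (X μ) (Y μ) μ) N := by
  obtain ⟨X, Y, hX, hY, hXY⟩ :=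
    exists_odeSol_eq (Q := Q) N (wkbFactor p R N) (-p N * wkbFactor p R N)
  exact ⟨X, Y, hX, hY, fun μ ↦ .of_eq (hXY μ).1 (hXY μ).2⟩

namespace IsWKBPhase

lemma exists_tendsto_zero_norm_sub_le (H : IsWKBPhase (fun w ↦ Q.eval w) h κ R K p p')
    (hR : 0 ≤ R) {X Y : ℕ → ℂ → ℂ}
    (hXY : ∀ n μ, IsPureDecayingAt p R (odeSol Q (X n μ) (Y n μ) μ) (R + n)) (ρ : ℝ) :
    ∃ e : ℕ → ℝ, Tendsto e atTop (𝓝 0) ∧ ∀ μ, ‖μ‖ ≤ ρ → ∀ n k, n ≤ k →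
      ‖X k μ - X n μ‖ ≤ e n ∧ ‖Y k μ - Y n μ‖ ≤ e n := by
  obtain ⟨S, hS⟩ := isCompact_Icc.exists_bound_of_continuousOn
    (f := fun x : ℝ ↦ Q.eval (x : ℂ)) (s := Icc 0 R) (by fun_prop)
  set M := max 1 (S + ρ)
  set k := 4 + 12 * (K + ρ)
  set C := 2 * (‖p R‖ ^ 2 + M ^ 2) * Real.exp (k * κ R) * Real.exp (2 * M * R)
  refine ⟨fun n ↦ √(C * (Real.exp (k * κ (R + n)) - 1)), ?_, fun μ hμ i j hij ↦ ?_⟩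
  · have hlim := (H.tendsto_exp_mul_tail k).comp
      (tendsto_atTop_add_const_left atTop R tendsto_natCast_atTop_atTop)
    simpa using ((hlim.sub_const 1).const_mul C).sqrt
  · have hM : 1 ≤ M := le_max_left _ _
    have hq (x) (hx : x ∈ Icc 0 R) : ‖Q.eval (x : ℂ) + μ‖ ≤ M ^ 2 :=
      calc ‖Q.eval (x : ℂ) + μ‖ ≤ S + ρ := (norm_add_le _ _).trans (add_le_add (hS x hx) hμ)
        _ ≤ M := le_max_right _ _
        _ ≤ M ^ 2 := le_self_pow₀ hM two_ne_zero
    have hsq := (H.add_const hμ).norm_sub_apply_zero_le hR hM hq (isSol_odeSol Q _ _ μ)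
      (isSol_odeSol Q _ _ μ) (hXY i μ) (hXY j μ) (by simp) (by simpa using hij)
    rw [deriv_odeSol_zero, deriv_odeSol_zero, odeSol_zero, odeSol_zero] at hsq
    exact ⟨Real.le_sqrt_of_sq_le ((le_add_of_nonneg_left (sq_nonneg _)).trans hsq),
      Real.le_sqrt_of_sq_le ((le_add_of_nonneg_right (sq_nonneg _)).trans hsq)⟩

lemma exists_differentiable_amplitudeEnergy_le (H : IsWKBPhase (fun w ↦ Q.eval w) h κ R K p p')
    (hR : 0 ≤ R) : ∃ X Y, Differentiable ℂ X ∧ Differentiable ℂ Y ∧ ∀ μ r, R ≤ r →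
      amplitudeEnergy p R (odeSol Q (X μ) (Y μ) μ) 1 r ≤
        Real.exp ((4 + 12 * (K + ‖μ‖)) * κ r) := by
  choose X Y hX hY hXY using fun n : ℕ ↦ exists_isPureDecayingAt Q p R (R + n)
  choose e he hXe using H.exists_tendsto_zero_norm_sub_le hR hXY
  obtain ⟨X₀, hX₀, hlimX⟩ := exists_differentiable_tendsto hX
    fun ρ ↦ ⟨e ρ, he ρ, fun μ hμ n k hnk ↦ (hXe ρ μ hμ n k hnk).1⟩
  obtain ⟨Y₀, hY₀, hlimY⟩ := exists_differentiable_tendsto hY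
    fun ρ ↦ ⟨e ρ, he ρ, fun μ hμ n k hnk ↦ (hXe ρ μ hμ n k hnk).2⟩
  refine ⟨X₀, Y₀, hX₀, hY₀, fun μ r hr ↦ ?_⟩
  have hval : Tendsto (fun n ↦ odeSol Q (X n μ) (Y n μ) μ r) atTop
      (𝓝 (odeSol Q (X₀ μ) (Y₀ μ) μ r)) := by
    rw [odeSol_eq_add Q (X₀ μ)]
    exact (((hlimX μ).mul_const _).add ((hlimY μ).mul_const _)).congr
      fun n ↦ (odeSol_eq_add Q (X n μ) (Y n μ) μ r).symm
  have hderiv : Tendsto (fun n ↦ deriv (odeSol Q (X n μ) (Y n μ) μ) r) atTop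
      (𝓝 (deriv (odeSol Q (X₀ μ) (Y₀ μ) μ) r)) := by
    rw [deriv_odeSol_eq_add Q (X₀ μ)]
    exact (((hlimX μ).mul_const _).add ((hlimY μ).mul_const _)).congr
      fun n ↦ (deriv_odeSol_eq_add Q (X n μ) (Y n μ) μ r).symm
  refine le_of_tendsto (tendsto_amplitudeEnergy hval hderiv) ?_
  filter_upwards [(tendsto_atTop_add_const_left atTop R
    tendsto_natCast_atTop_atTop).eventually_ge_atTop r] with n hn
  exact (H.add_const le_rfl).amplitudeEnergy_le_exp (isSol_odeSol Q _ _ μ) (hXY n μ) hr hn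

end IsWKBPhase

end limit

/-- `f` grows at most like an entire function of order `ρ` and finite type. -/
def HasGrowthOrder (f : ℂ → ℂ) (ρ : ℝ) : Prop :=
  ∃ B : ℝ, ∀ z, ‖f z‖ ≤ Real.exp (B * (1 + ‖z‖) ^ ρ)

/-- A family of nonzero solutions of `v'' = (Q + μ) v` that decay along the positive half-line and
depend on `μ` as entire functions of order at most `1 / 2 + 1 / deg Q`. -/
structure IsSubdominantFamily (Q : ℂ[X]) (g : ℂ → ℂ → ℂ) : Prop where
  isSol : ∀ μ, IsSol (fun w ↦ Q.eval w + μ) (g μ)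
  ne_zero : ∀ μ, g μ ≠ 0
  tendsto : ∀ μ, Tendsto (fun r : ℝ ↦ g μ r) atTop (𝓝 0)
  differentiable_param : ∀ w, Differentiable ℂ fun μ ↦ g μ w
  differentiable_deriv_param : ∀ w, Differentiable ℂ fun μ ↦ deriv (g μ) w
  growth : ∀ r ∈ Icc (0 : ℝ) 1,
    HasGrowthOrder (fun μ ↦ g μ r) (1 / 2 + (Q.natDegree : ℝ)⁻¹)
  growth_deriv : ∀ r ∈ Icc (0 : ℝ) 1,
    HasGrowthOrder (fun μ ↦ deriv (g μ) r) (1 / 2 + (Q.natDegree : ℝ)⁻¹)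

section growth

variable {Λ R ρ : ℝ} {m : ℕ}

lemma le_exp_two_mul_rpow (hΛ : 1 ≤ Λ) (hρ : 1 / 2 ≤ ρ) : Λ ≤ Real.exp (2 * Λ ^ ρ) := by
  rw [← Real.log_le_iff_le_exp (by positivity)]
  refine (Real.log_le_rpow_div (by positivity) (by positivity : 0 < ρ)).trans ?_
  rw [div_le_iff₀ (by positivity)]
  nlinarith [Real.rpow_nonneg (zero_le_one.trans hΛ) ρ]

lemma mul_exp_mul_exp_le {a : ℝ} (ha : 0 ≤ a) (b c : ℝ) (hΛ : 1 ≤ Λ) (hρ : 1 / 2 ≤ ρ) :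
    a * Λ * Real.exp (b * Λ ^ ρ) * Real.exp (c * Λ ^ ρ) ≤
      Real.exp ((a + 2 + b + c) * Λ ^ ρ) := by
  have hone : 1 ≤ Λ ^ ρ := Real.one_le_rpow hΛ (by positivity)
  have hae : a ≤ Real.exp (a * Λ ^ ρ) := by
    linarith [Real.add_one_le_exp (a * Λ ^ ρ), le_mul_of_one_le_right ha hone]
  calc a * Λ * Real.exp (b * Λ ^ ρ) * Real.exp (c * Λ ^ ρ)
      ≤ Real.exp (a * Λ ^ ρ) * Real.exp (2 * Λ ^ ρ) * Real.exp (b * Λ ^ ρ) *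
          Real.exp (c * Λ ^ ρ) := by gcongr; exact le_exp_two_mul_rpow hΛ hρ
    _ = Real.exp ((a + 2 + b + c) * Λ ^ ρ) := by
      rw [← Real.exp_add, ← Real.exp_add, ← Real.exp_add]; ring_nf

lemma mul_rpow_inv_natCast_pow (hΛ : 0 ≤ Λ) (hm : m ≠ 0) (R : ℝ) :
    (R * Λ ^ (m : ℝ)⁻¹) ^ m = R ^ m * Λ := by
  rw [mul_pow, Real.rpow_inv_natCast_pow hΛ hm]

lemma mul_rpowTail_le (hΛ : 1 ≤ Λ) (hR : 1 ≤ R) (hm : 3 ≤ m) :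
    Λ * rpowTail (m / 2) (R * Λ ^ (m : ℝ)⁻¹) ≤ Λ ^ (1 / 2 + (m : ℝ)⁻¹) / ((m : ℝ) / 2 - 1) := by
  have hΛ₀ : 0 < Λ := by positivity
  have hm' : (3 : ℝ) ≤ m := by exact_mod_cast hm
  have hroot : Λ ^ (m : ℝ)⁻¹ ≤ R * Λ ^ (m : ℝ)⁻¹ := le_mul_of_one_le_left (by positivity) hR
  have hα : 0 < (m : ℝ) / 2 - 1 := by linarith
  rw [rpowTail, ← mul_div_assoc]
  gcongr
  calc Λ * (R * Λ ^ (m : ℝ)⁻¹) ^ (-((m : ℝ) / 2 - 1))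
      ≤ Λ ^ (1 : ℝ) * (Λ ^ (m : ℝ)⁻¹) ^ (-((m : ℝ) / 2 - 1)) := by
        rw [Real.rpow_one]
        exact mul_le_mul_of_nonneg_left
          (Real.rpow_le_rpow_of_nonpos (by positivity) hroot (by linarith)) hΛ₀.le
    _ = Λ ^ (1 / 2 + (m : ℝ)⁻¹) := by
        rw [← Real.rpow_mul hΛ₀.le, ← Real.rpow_add hΛ₀]
        congr 1
        field_simp
        ring

lemma sqrt_mul_mul_mul_rpow (hΛ : 0 < Λ) (L R : ℝ) (hL : 0 ≤ L) :
    √(L * Λ) * (R * Λ ^ (m : ℝ)⁻¹) = √L * R * Λ ^ (1 / 2 + (m : ℝ)⁻¹) := by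
  rw [Real.sqrt_mul hL, Real.rpow_add hΛ, ← Real.sqrt_eq_rpow]
  ring

variable {Q : ℂ[X]} {p p' : ℝ → ℂ} {X Y : ℂ → ℂ}

lemma norm_eval_add_le {μ : ℂ} {r x : ℝ} (hx : x ∈ Icc 0 r)
    (hr : r ^ Q.natDegree ≤ R ^ Q.natDegree * (1 + ‖μ‖)) :
    ‖Q.eval (x : ℂ) + μ‖ ≤ ((∑ i ∈ Finset.range (Q.natDegree + 1), ‖Q.coeff i‖) *
      (1 + R ^ Q.natDegree) + 1) * (1 + ‖μ‖) := by
  set S := ∑ i ∈ Finset.range (Q.natDegree + 1), ‖Q.coeff i‖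
  have hxm : x ^ Q.natDegree ≤ R ^ Q.natDegree * (1 + ‖μ‖) :=
    (pow_le_pow_left₀ hx.1 hx.2 _).trans hr
  have hQ := norm_eval_le (Q := Q) le_rfl x
  rw [Complex.norm_of_nonneg hx.1] at hQ
  calc ‖Q.eval (x : ℂ) + μ‖
      ≤ S * (1 + ‖μ‖ + R ^ Q.natDegree * (1 + ‖μ‖)) + (1 + ‖μ‖) := by
        refine (norm_add_le _ _).trans (add_le_add (hQ.trans ?_) (by linarith))
        gcongr
        linarith [norm_nonneg μ]
    _ = _ := by ring

lemma norm_phase_sq_le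
    (H : IsWKBPhase (fun w ↦ Q.eval w) (fun r ↦ r ^ ((Q.natDegree : ℝ) / 2))
      (rpowTail (Q.natDegree / 2)) R 1 p p')
    {r : ℝ} (hR : 0 ≤ R) (hr : R ≤ r) :
    ‖p r‖ ^ 2 ≤ 9 * r ^ Q.natDegree := by
  refine (pow_le_pow_left₀ (norm_nonneg _) (H.norm_le r hr) 2).trans_eq ?_
  rw [mul_pow, rpow_half_natCast_sq (hR.trans hr)]
  norm_num

lemma amplitudeEnergy_zero_le_two_mul_exp {G : ℂ → ℂ → ℂ}
    (hG : ∀ μ r, R ≤ r → amplitudeEnergy p R (G μ) 1 r ≤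
      Real.exp ((4 + 12 * (1 + ‖μ‖)) * rpowTail (Q.natDegree / 2) r))
    (hR : 1 ≤ R) (hm : 3 ≤ Q.natDegree) (μ : ℂ) :
    amplitudeEnergy p R (G μ) 0 (R * (1 + ‖μ‖) ^ (Q.natDegree : ℝ)⁻¹) ≤
      2 * Real.exp (16 / ((Q.natDegree : ℝ) / 2 - 1) *
        (1 + ‖μ‖) ^ (1 / 2 + (Q.natDegree : ℝ)⁻¹)) := by
  set m := Q.natDegree
  have hΛ : 1 ≤ 1 + ‖μ‖ := le_add_of_nonneg_right (norm_nonneg μ)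
  set r := R * (1 + ‖μ‖) ^ (m : ℝ)⁻¹
  have hr : R ≤ r := le_mul_of_one_le_right (by positivity) (Real.one_le_rpow hΛ (by positivity))
  have hm' : (3 : ℝ) ≤ m := by exact_mod_cast hm
  have hα : 0 < (m : ℝ) / 2 - 1 := by linarith
  have htail : 0 ≤ rpowTail (m / 2) r := by rw [rpowTail]; positivity
  refine amplitudeEnergy_zero_le.trans <|
    mul_le_mul_of_nonneg_left ((hG μ r hr).trans ?_) two_pos.le
  rw [Real.exp_le_exp]
  calc (4 + 12 * (1 + ‖μ‖)) * rpowTail (m / 2) r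
      ≤ 16 * ((1 + ‖μ‖) * rpowTail (m / 2) r) := by
        rw [← mul_assoc]; gcongr; linarith
    _ ≤ 16 * ((1 + ‖μ‖) ^ (1 / 2 + (m : ℝ)⁻¹) / ((m : ℝ) / 2 - 1)) := by
        gcongr; exact mul_rpowTail_le hΛ hR hm
    _ = _ := by ring

lemma exists_norm_deriv_sq_add_norm_sq_le_exp {G : ℂ → ℂ → ℂ}
    (H : IsWKBPhase (fun w ↦ Q.eval w) (fun r ↦ r ^ ((Q.natDegree : ℝ) / 2))
      (rpowTail (Q.natDegree / 2)) R 1 p p')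
    (hG : ∀ μ r, R ≤ r → amplitudeEnergy p R (G μ) 1 r ≤
      Real.exp ((4 + 12 * (1 + ‖μ‖)) * rpowTail (Q.natDegree / 2) r))
    (hR : 1 ≤ R) (hm : 3 ≤ Q.natDegree)
    (hsol : ∀ μ, IsSol (fun w ↦ Q.eval w + μ) (G μ)) :
    ∃ B : ℝ, ∀ μ, ∀ x ∈ Icc (0 : ℝ) 1, ‖deriv (G μ) x‖ ^ 2 + ‖G μ x‖ ^ 2 ≤
      Real.exp (B * (1 + ‖μ‖) ^ (1 / 2 + (Q.natDegree : ℝ)⁻¹)) := by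
  set m := Q.natDegree
  set α := (m : ℝ) / 2 - 1
  set L := (∑ i ∈ Finset.range (m + 1), ‖Q.coeff i‖) * (1 + R ^ m) + 1
  have hL : 1 ≤ L := le_add_of_nonneg_left (by positivity)
  refine ⟨4 * (9 * R ^ m + L) + 2 + 16 / α + 2 * (√L * R), fun μ x hx ↦ ?_⟩
  have hE₀ := amplitudeEnergy_zero_le_two_mul_exp hG hR hm μ
  set Λ := 1 + ‖μ‖
  have hΛ : 1 ≤ Λ := le_add_of_nonneg_right (norm_nonneg μ)
  set r := R * Λ ^ (m : ℝ)⁻¹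
  have hrm : r ^ m = R ^ m * Λ := mul_rpow_inv_natCast_pow (by positivity) (by omega) R
  have hr : R ≤ r := le_mul_of_one_le_right (by positivity) (Real.one_le_rpow hΛ (by positivity))
  have hp : ‖p r‖ ^ 2 ≤ 9 * R ^ m * Λ := by
    rw [mul_assoc, ← hrm]; exact norm_phase_sq_le H (by positivity) hr
  have hsqrt : √(L * Λ) ^ 2 = L * Λ := Real.sq_sqrt (by positivity)
  have hM : 1 ≤ √(L * Λ) := Real.one_le_sqrt.2 (one_le_mul_of_one_le_of_one_le hL hΛ)
  refine ((H.add_const le_rfl).norm_deriv_sq_add_norm_sq_le (hsol μ) (by positivity) hr hM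
    (fun y hy ↦ hsqrt.symm ▸ norm_eval_add_le hy hrm.le) ⟨hx.1, hx.2.trans (hR.trans hr)⟩).trans ?_
  calc 2 * (‖p r‖ ^ 2 + √(L * Λ) ^ 2) * amplitudeEnergy p R (G μ) 0 r *
        Real.exp (2 * √(L * Λ) * r)
      ≤ 2 * (9 * R ^ m * Λ + L * Λ) * (2 * Real.exp (16 / α * Λ ^ (1 / 2 + (m : ℝ)⁻¹))) *
        Real.exp (2 * √(L * Λ) * r) := by
        rw [hsqrt]
        gcongr
        exact amplitudeEnergy_nonneg p R (G μ) 0 r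
    _ = 4 * (9 * R ^ m + L) * Λ * Real.exp (16 / α * Λ ^ (1 / 2 + (m : ℝ)⁻¹)) *
        Real.exp (2 * (√L * R) * Λ ^ (1 / 2 + (m : ℝ)⁻¹)) := by
        rw [mul_assoc 2 (√(L * Λ)) r, sqrt_mul_mul_mul_rpow (by positivity) L R (by positivity)]
        ring_nf
    _ ≤ _ := mul_exp_mul_exp_le (by positivity) _ _ hΛ (by simp)

end growth

lemma HasGrowthOrder.of_norm_sq_le {f : ℂ → ℂ} {B ρ : ℝ}
    (hf : ∀ z, ‖f z‖ ^ 2 ≤ Real.exp (B * (1 + ‖z‖) ^ ρ)) : HasGrowthOrder f ρ := by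
  refine ⟨B / 2, fun z ↦ le_of_sq_le_sq ?_ (Real.exp_pos _).le⟩
  refine (hf z).trans_eq ?_
  rw [← Real.exp_nat_mul]
  ring_nf

theorem exists_isSubdominantFamily {Q : ℂ[X]} (hQ : Q.Monic) (hm : 3 ≤ Q.natDegree) :
    ∃ g, IsSubdominantFamily Q g := by
  obtain ⟨R, p, p', hR, H⟩ := exists_isWKBPhase hQ hm
  obtain ⟨X, Y, hX, hY, hE⟩ := H.exists_differentiable_amplitudeEnergy_le (zero_le_one.trans hR)
  obtain ⟨B, hB⟩ := exists_norm_deriv_sq_add_norm_sq_le_exp H hE hR hm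
    fun μ ↦ isSol_odeSol Q (X μ) (Y μ) μ
  exact ⟨fun μ ↦ odeSol Q (X μ) (Y μ) μ,
    { isSol := fun μ ↦ isSol_odeSol Q (X μ) (Y μ) μ
      ne_zero := fun μ ↦ H.ne_zero_of_amplitudeEnergy_le (hE μ)
      tendsto := fun μ ↦ H.tendsto_zero_of_amplitudeEnergy_le (hE μ)
      differentiable_param := fun w ↦ by
        simp only [odeSol_eq_add Q (X _) (Y _)]
        exact (hX.mul (differentiable_odeSol_param Q 1 0 w)).add
          (hY.mul (differentiable_odeSol_param Q 0 1 w))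
      differentiable_deriv_param := fun w ↦ by
        simp only [deriv_odeSol_eq_add Q (X _) (Y _)]
        exact (hX.mul (differentiable_deriv_odeSol_param Q 1 0 w)).add
          (hY.mul (differentiable_deriv_odeSol_param Q 0 1 w))
      growth := fun r hr ↦ .of_norm_sq_le
        fun μ ↦ (le_add_of_nonneg_left (sq_nonneg _)).trans (hB μ r hr)
      growth_deriv := fun r hr ↦ .of_norm_sq_le
        fun μ ↦ (le_add_of_nonneg_right (sq_nonneg _)).trans (hB μ r hr) }⟩

/-! ### The spectral determinant -/

/-- The polynomial `ω² Q(ω X)`, the potential obtained from `Q` by the substitution `w ↦ ω w`. -/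
noncomputable def rotatedPoly (Q : ℂ[X]) (ω : ℂ) : ℂ[X] :=
  Polynomial.C (ω ^ 2) * Q.comp (Polynomial.C ω * Polynomial.X)

/-- `lam` is an eigenvalue of the problem `v'' = (Q + lam) v` with decay along the two rays
through `ω` and `ω⁻¹`. -/
def IsRayEigenvalue (Q : ℂ[X]) (ω lam : ℂ) : Prop :=
  ∃ v : ℂ → ℂ, IsSol (fun w ↦ Q.eval w + lam) v ∧ v ≠ 0 ∧
    Tendsto (fun r : ℝ ↦ v (ω * r)) atTop (𝓝 0) ∧ Tendsto (fun r : ℝ ↦ v (ω⁻¹ * r)) atTop (𝓝 0)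

/-- The Wronskian of the two solutions of `v'' = (Q + lam) v` that decay along the rays through `ω`
and `ω⁻¹`, these solutions being rotations of members of the families `g₁` and `g₂`. -/
noncomputable def spectralDet (ω : ℂ) (g₁ g₂ : ℂ → ℂ → ℂ) (lam : ℂ) : ℂ :=
  wronskian (fun w ↦ g₁ (ω ^ 2 * lam) (ω⁻¹ * w)) (fun w ↦ g₂ (ω⁻¹ ^ 2 * lam) (ω * w)) 0

section rotatedPoly

variable {Q : ℂ[X]} {ω : ℂ}

lemma eval_rotatedPoly (Q : ℂ[X]) (ω w : ℂ) :
    (rotatedPoly Q ω).eval w = ω ^ 2 * Q.eval (ω * w) := by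
  simp [rotatedPoly]

lemma natDegree_rotatedPoly (Q : ℂ[X]) (hω : ω ≠ 0) :
    (rotatedPoly Q ω).natDegree = Q.natDegree := by
  rw [rotatedPoly, Polynomial.natDegree_C_mul (pow_ne_zero 2 hω), Polynomial.natDegree_comp,
    Polynomial.natDegree_C_mul_X ω hω, mul_one]

lemma monic_rotatedPoly (hQ : Q.Monic) (hω : ω ^ (Q.natDegree + 2) = 1) :
    (rotatedPoly Q ω).Monic := by
  rw [Polynomial.Monic, Polynomial.leadingCoeff,
    natDegree_rotatedPoly Q (IsUnit.of_pow_eq_one hω (by omega)).ne_zero, rotatedPoly,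
    Polynomial.coeff_C_mul, Polynomial.comp_C_mul_X_coeff, hQ.coeff_natDegree, one_mul,
    ← pow_add, add_comm, hω]

end rotatedPoly

lemma differentiable_comp_const_mul {𝕜 : Type*} [NontriviallyNormedField 𝕜] {f : 𝕜 → 𝕜}
    (hf : Differentiable 𝕜 f) (a : 𝕜) : Differentiable 𝕜 fun z ↦ f (a * z) :=
  hf.comp (differentiable_id.const_mul a)

lemma wronskian_comp_mul_zero (u v : ℂ → ℂ) (a b : ℂ) :
    wronskian (fun w ↦ u (a * w)) (fun w ↦ v (b * w)) 0 =
      u 0 * (b * deriv v 0) - a * deriv u 0 * v 0 := by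
  simp [wronskian, deriv_comp_mul_left]

namespace IsSubdominantFamily

variable {Q : ℂ[X]} {g g₁ g₂ : ℂ → ℂ → ℂ} {ω : ℂ}

lemma isSol_rotated (hg : IsSubdominantFamily (rotatedPoly Q ω) g) (hω : ω ≠ 0) (lam : ℂ) :
    IsSol (fun w ↦ Q.eval w + lam) fun w ↦ g (ω ^ 2 * lam) (ω⁻¹ * w) := by
  convert (hg.isSol (ω ^ 2 * lam)).comp_mul ω⁻¹ using 2 with w
  rw [eval_rotatedPoly, ← mul_assoc ω, mul_inv_cancel₀ hω, one_mul, ← mul_add, ← mul_assoc,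
    ← mul_pow, inv_mul_cancel₀ hω, one_pow, one_mul]

lemma rotated_ne_zero (hg : IsSubdominantFamily Q g) (hω : ω ≠ 0) (μ : ℂ) :
    (fun w ↦ g μ (ω * w)) ≠ 0 := by
  obtain ⟨w, hw⟩ := Function.ne_iff.1 (hg.ne_zero μ)
  exact Function.ne_iff.2 ⟨ω⁻¹ * w, by simpa [← mul_assoc, mul_inv_cancel₀ hω] using hw⟩

lemma tendsto_rotated (hg : IsSubdominantFamily Q g) (hω : ω ≠ 0) (μ : ℂ) :
    Tendsto (fun r : ℝ ↦ g μ (ω⁻¹ * (ω * r))) atTop (𝓝 0) := by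
  simpa only [← mul_assoc, inv_mul_cancel₀ hω, one_mul] using hg.tendsto μ

lemma eq_const_mul_rotated (hg : IsSubdominantFamily (rotatedPoly Q ω) g) (hQ : Q.Monic)
    (hdeg : Q.natDegree ≠ 0) (hω : ω ^ (Q.natDegree + 2) = 1) {lam : ℂ} {v : ℂ → ℂ}
    (hv : IsSol (fun w ↦ Q.eval w + lam) v) (hv₀ : Tendsto (fun r : ℝ ↦ v (ω * r)) atTop (𝓝 0)) :
    ∃ c : ℂ, ∀ w, v w = c * g (ω ^ 2 * lam) (ω⁻¹ * w) := by
  have hω₀ : ω ≠ 0 := (IsUnit.of_pow_eq_one hω (by omega)).ne_zero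
  have hrot : IsSol (fun w ↦ (rotatedPoly Q ω).eval w + ω ^ 2 * lam) fun w ↦ v (ω * w) := by
    simpa only [eval_rotatedPoly, mul_add] using hv.comp_mul ω
  have hre := eventually_re_eval_add_nonneg (monic_rotatedPoly hQ hω)
    (by rwa [natDegree_rotatedPoly Q hω₀]) (ω ^ 2 * lam)
  obtain ⟨c, hc⟩ := (hg.isSol (ω ^ 2 * lam)).exists_eq_const_mul_of_tendsto hrot hre
    (hg.tendsto _) hv₀ (hg.ne_zero _)
  exact ⟨c, fun w ↦ by rw [← hc, mul_inv_cancel_left₀ hω₀]⟩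

lemma isRayEigenvalue_of_spectralDet_eq_zero (h₁ : IsSubdominantFamily (rotatedPoly Q ω) g₁)
    (h₂ : IsSubdominantFamily (rotatedPoly Q ω⁻¹) g₂) (hω : ω ≠ 0) {lam : ℂ}
    (h₀ : spectralDet ω g₁ g₂ lam = 0) : IsRayEigenvalue Q ω lam := by
  have s₁ := h₁.isSol_rotated hω lam
  have s₂ := h₂.isSol_rotated (inv_ne_zero hω) lam
  have hne := h₁.rotated_ne_zero (inv_ne_zero hω) (ω ^ 2 * lam)
  simp only [inv_inv] at s₂
  obtain ⟨w₀, hw₀⟩ := Function.ne_iff.1 (h₂.rotated_ne_zero hω (ω⁻¹ ^ 2 * lam))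
  have hW : ∀ w, wronskian (fun w ↦ g₂ (ω⁻¹ ^ 2 * lam) (ω * w))
      (fun w ↦ g₁ (ω ^ 2 * lam) (ω⁻¹ * w)) w = 0 := fun w ↦ by
    rw [spectralDet, wronskian] at h₀
    rw [s₂.wronskian_eq s₁ w 0, wronskian]
    linear_combination -h₀
  obtain ⟨c, hc⟩ := exists_eq_const_mul_of_wronskian_eq_zero s₂.differentiable s₁.differentiable
    hW hw₀
  refine ⟨_, s₁, hne, h₁.tendsto_rotated hω _, ?_⟩
  have := (h₂.tendsto_rotated (inv_ne_zero hω) (ω⁻¹ ^ 2 * lam)).const_mul c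
  simpa only [hc, inv_inv, mul_zero] using this

theorem spectralDet_eq_zero_iff (h₁ : IsSubdominantFamily (rotatedPoly Q ω) g₁)
    (h₂ : IsSubdominantFamily (rotatedPoly Q ω⁻¹) g₂) (hQ : Q.Monic) (hdeg : Q.natDegree ≠ 0)
    (hω : ω ^ (Q.natDegree + 2) = 1) (lam : ℂ) :
    spectralDet ω g₁ g₂ lam = 0 ↔ IsRayEigenvalue Q ω lam := by
  refine ⟨h₁.isRayEigenvalue_of_spectralDet_eq_zero h₂
    (IsUnit.of_pow_eq_one hω (by omega)).ne_zero, fun ⟨v, hv, hne, t₁, t₂⟩ ↦ ?_⟩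
  obtain ⟨c₁, hc₁⟩ := h₁.eq_const_mul_rotated hQ hdeg hω hv t₁
  obtain ⟨c₂, hc₂⟩ := h₂.eq_const_mul_rotated hQ hdeg (by rw [inv_pow, hω, inv_one]) hv t₂
  simp only [inv_inv] at hc₂
  have hc₁₀ : c₁ ≠ 0 := by rintro rfl; exact hne (funext fun w ↦ by simp [hc₁])
  have hprop : (fun w ↦ g₁ (ω ^ 2 * lam) (ω⁻¹ * w)) =
      fun w ↦ c₁⁻¹ * c₂ * g₂ (ω⁻¹ ^ 2 * lam) (ω * w) := by
    ext w
    rw [mul_assoc, ← hc₂, hc₁, inv_mul_cancel_left₀ hc₁₀]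
  rw [spectralDet, hprop, wronskian, deriv_const_mul_field]
  ring

lemma differentiable_spectralDet {Q₁ Q₂ : ℂ[X]} (h₁ : IsSubdominantFamily Q₁ g₁)
    (h₂ : IsSubdominantFamily Q₂ g₂) (ω : ℂ) : Differentiable ℂ (spectralDet ω g₁ g₂) := by
  rw [show spectralDet ω g₁ g₂ = fun lam ↦ _ from
    funext fun lam ↦ wronskian_comp_mul_zero _ _ _ _]
  exact ((differentiable_comp_const_mul (h₁.differentiable_param 0) _).mul
      ((differentiable_comp_const_mul (h₂.differentiable_deriv_param 0) _).const_mul ω)).sub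
    (((differentiable_comp_const_mul (h₁.differentiable_deriv_param 0) _).const_mul ω⁻¹).mul
      (differentiable_comp_const_mul (h₂.differentiable_param 0) _))

end IsSubdominantFamily

/-! ### Reduction of the eigenvalue problem -/

/-- The primitive root of unity `exp (2πi / (m + 2))`. -/
noncomputable def rayDirection (m : ℕ) : ℂ :=
  Complex.exp ((2 * Real.pi / ((m : ℝ) + 2) : ℝ) * Complex.I)

/-- The polynomial `X ^ m + a₁ X ^ (m - 1) + ⋯ + a_{m-1} X`. -/
noncomputable def potentialPoly (m : ℕ) (a : ℕ → ℂ) : ℂ[X] :=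
  Polynomial.X ^ m + ∑ j ∈ Finset.Icc 1 (m - 1), Polynomial.C (a j) * Polynomial.X ^ (m - j)

section reduction

lemma rayDirection_pow (m : ℕ) : rayDirection m ^ (m + 2) = 1 := by
  have hm : (m : ℂ) + 2 ≠ 0 := by exact_mod_cast (by omega : m + 2 ≠ 0)
  rw [rayDirection, ← Complex.exp_nat_mul, ← Complex.exp_two_pi_mul_I]
  congr 1
  push_cast
  field_simp

lemma rayDirection_inv (m : ℕ) :
    (rayDirection m)⁻¹ = Complex.exp ((-(2 * Real.pi / ((m : ℝ) + 2)) : ℝ) * Complex.I) := by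
  rw [rayDirection, ← Complex.exp_neg, Complex.ofReal_neg, neg_mul]

lemma eval_potentialPoly (m : ℕ) (a : ℕ → ℂ) (z : ℂ) :
    (potentialPoly m a).eval z = z ^ m + Ppoly m a z := by
  simp [potentialPoly, Ppoly, Polynomial.eval_finsetSum]

lemma degree_sum_C_mul_X_pow_lt (m : ℕ) (a : ℕ → ℂ) :
    (∑ j ∈ Finset.Icc 1 (m - 1), Polynomial.C (a j) * Polynomial.X ^ (m - j)).degree <
      (m : WithBot ℕ) := by
  refine (Polynomial.degree_sum_le _ _).trans_lt ((Finset.sup_lt_iff (WithBot.bot_lt_coe m)).2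
    fun j hj ↦ (Polynomial.degree_C_mul_X_pow_le _ _).trans_lt ?_)
  have := Finset.mem_Icc.1 hj
  exact Nat.cast_lt.2 (by omega)

lemma monic_potentialPoly (m : ℕ) (a : ℕ → ℂ) : (potentialPoly m a).Monic :=
  Polynomial.monic_X_pow_add (degree_sum_C_mul_X_pow_lt m a)

lemma natDegree_potentialPoly (m : ℕ) (a : ℕ → ℂ) : (potentialPoly m a).natDegree = m := by
  rw [potentialPoly, Polynomial.natDegree_add_eq_left_of_degree_lt, Polynomial.natDegree_X_pow]
  rw [Polynomial.degree_X_pow]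
  exact degree_sum_C_mul_X_pow_lt m a

lemma ofReal_mul_exp_sub_pi_div_two (x r : ℝ) :
    (r : ℂ) * Complex.exp (((-(Real.pi / 2) + x : ℝ) : ℂ) * Complex.I) =
      -Complex.I * (Complex.exp (x * Complex.I) * r) := by
  rw [Complex.ofReal_add, add_mul, Complex.exp_add, Complex.ofReal_neg, neg_mul, Complex.exp_neg,
    Complex.ofReal_div, Complex.ofReal_ofNat, Complex.exp_pi_div_two_mul_I, Complex.inv_I]
  ring

lemma exists_forall_eq_iff_eq_zero_of_tendsto {ι : Type*} {l : Filter ι} [l.NeBot] {u : ℂ → ℂ}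
    {γ : ι → ℂ} (hu : Tendsto (fun i ↦ u (γ i)) l (𝓝 0)) : (∃ c, ∀ z, u z = c) ↔ u = 0 := by
  refine ⟨fun ⟨c, hc⟩ ↦ funext fun z ↦ ?_, fun h ↦ ⟨0, fun z ↦ congrFun h z⟩⟩
  simp only [hc] at hu
  exact (hc z).trans (tendsto_nhds_unique tendsto_const_nhds hu)

theorem isEigenvalue_iff_isRayEigenvalue (m : ℕ) (a : ℕ → ℂ) (lam : ℂ) :
    IsEigenvalue m a lam ↔ IsRayEigenvalue (potentialPoly m a) (rayDirection m) lam := by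
  have hI : Complex.I * -Complex.I = 1 := by simp
  constructor
  · rintro ⟨u, hu, hconst, heq, t₁, t₂⟩
    rw [exists_forall_eq_iff_eq_zero_of_tendsto t₁] at hconst
    simp only [sub_eq_add_neg, ofReal_mul_exp_sub_pi_div_two, ← rayDirection_inv] at t₁ t₂
    have hsol : IsSol (fun z ↦ -((potentialPoly m a).eval (Complex.I * z) + lam)) u :=
      ⟨hu, fun z ↦ by rw [eval_potentialPoly]; linear_combination -heq z⟩
    refine ⟨fun w ↦ u (-Complex.I * w), ?_, fun h ↦ hconst (funext fun z ↦ ?_), t₁, t₂⟩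
    · simpa [← mul_assoc, hI] using hsol.comp_mul (-Complex.I)
    · simpa [← mul_assoc] using congrFun h (Complex.I * z)
  · rintro ⟨v, hv, hne, t₁, t₂⟩
    have hsol := hv.comp_mul Complex.I
    have tt₁ : Tendsto (fun r : ℝ ↦ v (Complex.I * (-Complex.I * (rayDirection m * r)))) atTop
        (𝓝 0) := by simpa only [← mul_assoc, hI, one_mul] using t₁
    have tt₂ : Tendsto (fun r : ℝ ↦ v (Complex.I * (-Complex.I * ((rayDirection m)⁻¹ * r)))) atTop
        (𝓝 0) := by simpa only [← mul_assoc, hI, one_mul] using t₂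
    refine ⟨fun z ↦ v (Complex.I * z), hsol.differentiable, ?_, fun z ↦ ?_, ?_, ?_⟩
    · rw [exists_forall_eq_iff_eq_zero_of_tendsto (u := fun z ↦ v (Complex.I * z)) tt₁]
      refine fun h ↦ hne (funext fun w ↦ ?_)
      simpa [← mul_assoc] using congrFun h (-Complex.I * w)
    · rw [hsol.deriv_deriv, eval_potentialPoly, Complex.I_sq]
      ring
    · simpa only [ofReal_mul_exp_sub_pi_div_two] using tt₁.congr fun r ↦ by rw [rayDirection]
    · simpa only [sub_eq_add_neg, ofReal_mul_exp_sub_pi_div_two, ← rayDirection_inv] using tt₂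

end reduction

/-! ### The spectral determinant near the negative axis -/

section coercive

variable {Q : ℂ[X]} {c : ℝ}

lemma exists_norm_eval_sub_pow_le (hQ : Q.Monic) (hc : 0 < c) :
    ∃ T : ℝ, ∀ r : ℝ, 0 ≤ r →
      ‖Q.eval (r : ℂ) - (r : ℂ) ^ Q.natDegree‖ ≤ c * r ^ Q.natDegree + T := by
  have hlim := (tendsto_eval_div_pow (le_refl Q.natDegree)).sub_const 1
  rw [hQ.coeff_natDegree, sub_self] at hlim
  obtain ⟨r₀, hr₀⟩ := eventually_atTop.1
    ((hlim.norm.eventually_lt_const (by rwa [norm_zero])).and (eventually_gt_atTop 0))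
  have hcont : Continuous fun r : ℝ ↦ Q.eval (r : ℂ) - (r : ℂ) ^ Q.natDegree := by fun_prop
  obtain ⟨M, hM⟩ := (isCompact_Icc (a := (0 : ℝ)) (b := r₀)).exists_bound_of_continuousOn
    hcont.continuousOn
  refine ⟨max M 0, fun r hr ↦ ?_⟩
  have hpow : 0 ≤ c * r ^ Q.natDegree := by positivity
  rcases le_total r r₀ with h | h
  · linarith [hM r ⟨hr, h⟩, le_max_left M 0]
  obtain ⟨hlt, hpos⟩ := hr₀ r h
  have hne : (r : ℂ) ^ Q.natDegree ≠ 0 := pow_ne_zero _ (by exact_mod_cast hpos.ne')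
  rw [div_sub_one hne, norm_div, norm_pow, Complex.norm_of_nonneg hr,
    div_lt_iff₀ (by positivity)] at hlt
  linarith [le_max_right M 0]

lemma eventually_isCoerciveRotation (hQ : Q.Monic) (hc : 0 < c) :
    ∀ᶠ s : ℝ in atTop, ∀ η : ℂ, ‖η‖ = 1 → 2 * c ≤ η.re →
      IsCoerciveRotation (fun w ↦ Q.eval w + (s : ℂ) ^ 2 * η⁻¹ ^ 2) η c s := by
  obtain ⟨T, hQT⟩ := exists_norm_eval_sub_pow_le hQ hc
  filter_upwards [eventually_gt_atTop 0,
    (tendsto_pow_atTop two_ne_zero).eventually_ge_atTop (T / c)] with s hs hsT η hη hre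
  rw [div_le_iff₀ hc] at hsT
  refine ⟨hη.le, hc, hs, by linarith, fun r hr ↦ ?_⟩
  have hη₀ : η ≠ 0 := norm_ne_zero_iff.1 (hη ▸ one_ne_zero)
  have hsplit : η * (Q.eval (r : ℂ) + (s : ℂ) ^ 2 * η⁻¹ ^ 2) = ((r ^ Q.natDegree : ℝ) : ℂ) * η +
      η * (Q.eval (r : ℂ) - (r : ℂ) ^ Q.natDegree) + ((s ^ 2 : ℝ) : ℂ) * starRingEnd ℂ η := by
    rw [← Complex.inv_eq_conj hη]
    push_cast
    field_simp
    ring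
  have herr := (abs_le.1 (Complex.abs_re_le_norm
    (η * (Q.eval (r : ℂ) - (r : ℂ) ^ Q.natDegree)))).1
  rw [norm_mul, hη, one_mul] at herr
  rw [hsplit, Complex.add_re, Complex.add_re, Complex.re_ofReal_mul, Complex.re_ofReal_mul,
    Complex.conj_re]
  nlinarith [hQT r hr, mul_le_mul_of_nonneg_left hre (pow_nonneg hr Q.natDegree),
    mul_le_mul_of_nonneg_left hre (sq_nonneg s), mul_nonneg hc.le (pow_nonneg hr Q.natDegree)]

end coercive

/-- The real part of `τ x̄ ȳ (x y' - x' y)` is `‖x‖² J₂ + ‖y‖² J₁`, to which AM-GM applies. -/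
lemma four_mul_le_norm_det_sq {τ x x' y y' : ℂ} {J₁ J₂ : ℝ} (hτ : ‖τ‖ = 1) (hx : x ≠ 0)
    (hy : y ≠ 0) (h₁ : J₁ = -(starRingEnd ℂ x * (τ * x')).re)
    (h₂ : J₂ = (starRingEnd ℂ y * (τ * y')).re) (hJ₁ : 0 ≤ J₁) (hJ₂ : 0 ≤ J₂) :
    4 * (J₁ * J₂) ≤ ‖x * y' - x' * y‖ ^ 2 := by
  have hre : (τ * starRingEnd ℂ x * starRingEnd ℂ y * (x * y' - x' * y)).re =
      ‖x‖ ^ 2 * J₂ + ‖y‖ ^ 2 * J₁ := by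
    have hexpand : τ * starRingEnd ℂ x * starRingEnd ℂ y * (x * y' - x' * y) =
        ((‖x‖ ^ 2 : ℝ) : ℂ) * (starRingEnd ℂ y * (τ * y')) -
          ((‖y‖ ^ 2 : ℝ) : ℂ) * (starRingEnd ℂ x * (τ * x')) := by
      push_cast
      rw [← Complex.mul_conj' x, ← Complex.mul_conj' y]
      ring
    rw [hexpand, Complex.sub_re, Complex.re_ofReal_mul, Complex.re_ofReal_mul, h₁, h₂]
    ring
  have hle : ‖x‖ ^ 2 * J₂ + ‖y‖ ^ 2 * J₁ ≤ ‖x‖ * ‖y‖ * ‖x * y' - x' * y‖ := by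
    rw [← hre]
    exact (Complex.re_le_norm _).trans_eq (by simp only [norm_mul, RCLike.norm_conj, hτ, one_mul])
  refine le_of_mul_le_mul_left (a := (‖x‖ * ‖y‖) ^ 2) ?_ (by positivity)
  calc (‖x‖ * ‖y‖) ^ 2 * (4 * (J₁ * J₂))
      ≤ (‖x‖ ^ 2 * J₂ + ‖y‖ ^ 2 * J₁) ^ 2 := by
        linarith [four_mul_le_sq_add (‖x‖ ^ 2 * J₂) (‖y‖ ^ 2 * J₁)]
    _ ≤ (‖x‖ * ‖y‖ * ‖x * y' - x' * y‖) ^ 2 := by gcongr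
    _ = (‖x‖ * ‖y‖) ^ 2 * ‖x * y' - x' * y‖ ^ 2 := mul_pow _ _ _

namespace IsSubdominantFamily

variable {Q Q₁ Q₂ : ℂ[X]} {g g₁ g₂ : ℂ → ℂ → ℂ} {ω : ℂ} {c : ℝ}

lemma norm_sq_le_exp_mul_energy (h : IsSubdominantFamily Q g) (hQ : Q.Monic)
    (hd : Q.natDegree ≠ 0) {μ η : ℂ} {s : ℝ}
    (hη : IsCoerciveRotation (fun w ↦ Q.eval w + μ) η c s) (hcs : 1 ≤ c * s) :
    g μ 0 ≠ 0 ∧ g μ 1 ≠ 0 ∧ 0 ≤ energy η (g μ) 0 ∧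
      ‖g μ 1‖ ^ 2 ≤ Real.exp (-(2 * c * s)) * energy η (g μ) 0 := by
  have hre := eventually_re_eval_add_nonneg hQ hd μ
  have hne {r : ℝ} (hr : 0 ≤ r) := hη.apply_ne_zero (h.isSol μ) hre (h.tendsto μ) (h.ne_zero μ) hr
  have hdecay := hη.mul_norm_sq_le_exp_mul_energy (h.isSol μ) hre (h.tendsto μ) zero_le_one
  rw [Complex.ofReal_one, mul_one] at hdecay
  exact ⟨by simpa using hne le_rfl, by simpa using hne zero_le_one,
    hη.energy_nonneg (h.isSol μ) hre (h.tendsto μ) le_rfl,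
    (le_mul_of_one_le_left (sq_nonneg _) hcs).trans hdecay⟩

lemma four_mul_energy_mul_energy_le {τ lam : ℂ} (hτ : ‖τ‖ = 1) (h₁₀ : g₁ (ω ^ 2 * lam) 0 ≠ 0)
    (h₂₀ : g₂ (ω⁻¹ ^ 2 * lam) 0 ≠ 0)
    (hJ₁ : 0 ≤ energy (τ * ω⁻¹) (g₁ (ω ^ 2 * lam)) 0)
    (hJ₂ : 0 ≤ energy (-(τ * ω)) (g₂ (ω⁻¹ ^ 2 * lam)) 0) :
    4 * (energy (τ * ω⁻¹) (g₁ (ω ^ 2 * lam)) 0 * energy (-(τ * ω)) (g₂ (ω⁻¹ ^ 2 * lam)) 0) ≤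
      ‖spectralDet ω g₁ g₂ lam‖ ^ 2 := by
  rw [spectralDet, wronskian_comp_mul_zero]
  refine four_mul_le_norm_det_sq hτ h₁₀ h₂₀ ?_ ?_ hJ₁ hJ₂
  · rw [energy, Complex.ofReal_zero, mul_assoc τ]
  · rw [energy, Complex.ofReal_zero, ← Complex.neg_re]
    ring_nf

/-- Rotating the energies by `τ ω⁻¹` and `-τ ω` makes both of them nonnegative, so that the
determinant dominates the exponentially larger energies at the origin. -/
lemma eventually_norm_mul_le_exp_mul_spectralDet
    (h₁ : IsSubdominantFamily Q₁ g₁) (h₂ : IsSubdominantFamily Q₂ g₂) (hQ₁ : Q₁.Monic)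
    (hQ₂ : Q₂.Monic) (hd₁ : Q₁.natDegree ≠ 0) (hd₂ : Q₂.natDegree ≠ 0) (hω : ‖ω‖ = 1) (hc : 0 < c) :
    ∀ᶠ s : ℝ in atTop, ∀ τ lam : ℂ, ‖τ‖ = 1 → 2 * c ≤ (τ * ω⁻¹).re → 2 * c ≤ (-(τ * ω)).re →
      lam = (s : ℂ) ^ 2 * τ⁻¹ ^ 2 → g₁ (ω ^ 2 * lam) 1 * g₂ (ω⁻¹ ^ 2 * lam) 1 ≠ 0 ∧
        ‖g₁ (ω ^ 2 * lam) 1 * g₂ (ω⁻¹ ^ 2 * lam) 1‖ ≤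
          Real.exp (-(2 * c * s)) * ‖spectralDet ω g₁ g₂ lam‖ := by
  filter_upwards [eventually_isCoerciveRotation hQ₁ hc, eventually_isCoerciveRotation hQ₂ hc,
    eventually_ge_atTop (1 / c)] with s hs₁ hs₂ hcs τ lam hτ hre₁ hre₂ hlam
  rw [div_le_iff₀ hc, mul_comm] at hcs
  have hη₁ := hs₁ _ (by rw [norm_mul, norm_inv, hτ, hω, inv_one, mul_one]) hre₁
  have hη₂ := hs₂ _ (by rw [norm_neg, norm_mul, hτ, hω, mul_one]) hre₂
  rw [show (s : ℂ) ^ 2 * (τ * ω⁻¹)⁻¹ ^ 2 = ω ^ 2 * lam by rw [hlam, mul_inv, inv_inv]; ring] at hη₁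
  rw [show (s : ℂ) ^ 2 * (-(τ * ω))⁻¹ ^ 2 = ω⁻¹ ^ 2 * lam by
    rw [hlam, inv_neg, neg_sq, mul_inv]; ring] at hη₂
  obtain ⟨zero₁, one₁, J₁, decay₁⟩ := h₁.norm_sq_le_exp_mul_energy hQ₁ hd₁ hη₁ hcs
  obtain ⟨zero₂, one₂, J₂, decay₂⟩ := h₂.norm_sq_le_exp_mul_energy hQ₂ hd₂ hη₂ hcs
  have hdet := four_mul_energy_mul_energy_le hτ zero₁ zero₂ J₁ J₂
  refine ⟨mul_ne_zero one₁ one₂, ?_⟩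
  rw [norm_mul, ← sq_le_sq₀ (by positivity) (by positivity), mul_pow, mul_pow]
  refine (mul_le_mul decay₁ decay₂ (sq_nonneg _) (by positivity)).trans ?_
  rw [mul_mul_mul_comm, ← sq]
  exact mul_le_mul_of_nonneg_left (by linarith [mul_nonneg J₁ J₂]) (by positivity)

end IsSubdominantFamily

/-! ### A sector around the negative axis -/

/-- The closed sector of half-angle `β` around the negative real axis. -/
def negSector (β : ℝ) : Set ℂ := {z | |Complex.arg (-z)| ≤ β}

lemma sin_le_cos_pi_div_two_sub {θ γ : ℝ} (hθ : 0 ≤ θ) (hθ' : θ ≤ Real.pi / 2)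
    (hγ : |γ| ≤ 3 * θ / 2) : Real.sin (θ / 4) ≤ Real.cos (Real.pi / 2 - γ / 2 - θ) := by
  obtain ⟨hγ₁, hγ₂⟩ := abs_le.1 hγ
  rw [← Real.cos_pi_div_two_sub, ← Real.cos_abs (Real.pi / 2 - γ / 2 - θ)]
  exact Real.cos_le_cos_of_nonneg_of_le_pi (abs_nonneg _) (by linarith)
    (abs_le.2 ⟨by linarith, by linarith⟩)

lemma eq_norm_mul_exp_arg_neg (lam : ℂ) : lam = ((√‖lam‖ : ℝ) : ℂ) ^ 2 *
    (Complex.exp ((Real.pi / 2 - Complex.arg (-lam) / 2 : ℝ) * Complex.I))⁻¹ ^ 2 := by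
  have hexp : (Complex.exp ((Real.pi / 2 - Complex.arg (-lam) / 2 : ℝ) * Complex.I))⁻¹ ^ 2 =
      -Complex.exp (Complex.arg (-lam) * Complex.I) := by
    rw [← Complex.exp_neg, ← Complex.exp_nat_mul, ← Complex.exp_sub_pi_mul_I]
    congr 1
    push_cast
    ring
  rw [hexp, ← Complex.ofReal_pow, Real.sq_sqrt (norm_nonneg _), ← norm_neg lam, mul_neg,
    Complex.norm_mul_exp_arg_mul_I, neg_neg]

theorem IsSubdominantFamily.exists_eventually_norm_mul_le {Q₁ Q₂ : ℂ[X]} {g₁ g₂ : ℂ → ℂ → ℂ}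
    (h₁ : IsSubdominantFamily Q₁ g₁) (h₂ : IsSubdominantFamily Q₂ g₂) (hQ₁ : Q₁.Monic)
    (hQ₂ : Q₂.Monic) (hd₁ : Q₁.natDegree ≠ 0) (hd₂ : Q₂.natDegree ≠ 0) {θ : ℝ} {ω : ℂ}
    (hθ : 0 < θ) (hθ' : θ ≤ Real.pi / 2) (hω : ω = Complex.exp (θ * Complex.I)) :
    ∃ c : ℝ, 0 < c ∧ ∀ᶠ lam in Bornology.cobounded ℂ ⊓ 𝓟 (negSector (3 * θ / 2)),
      g₁ (ω ^ 2 * lam) 1 * g₂ (ω⁻¹ ^ 2 * lam) 1 ≠ 0 ∧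
        ‖g₁ (ω ^ 2 * lam) 1 * g₂ (ω⁻¹ ^ 2 * lam) 1‖ ≤
          Real.exp (-(2 * c * √‖lam‖)) * ‖spectralDet ω g₁ g₂ lam‖ := by
  have hc : 0 < Real.sin (θ / 4) / 2 :=
    half_pos (Real.sin_pos_of_pos_of_lt_pi (by linarith) (by linarith))
  refine ⟨Real.sin (θ / 4) / 2, hc, eventually_inf_principal.2 ?_⟩
  have hsqrt : Tendsto (fun lam : ℂ ↦ √‖lam‖) (Bornology.cobounded ℂ) atTop :=
    Real.tendsto_sqrt_atTop.comp tendsto_norm_cobounded_atTop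
  filter_upwards [hsqrt.eventually (h₁.eventually_norm_mul_le_exp_mul_spectralDet h₂ hQ₁ hQ₂ hd₁ hd₂
    (hω ▸ Complex.norm_exp_ofReal_mul_I θ) hc)] with lam hlam hsector
  refine hlam _ lam (Complex.norm_exp_ofReal_mul_I _) ?_ ?_ (eq_norm_mul_exp_arg_neg lam)
  · rw [hω, ← Complex.exp_neg, ← Complex.exp_add, ← neg_mul, ← add_mul, ← sub_eq_add_neg,
      ← Complex.ofReal_sub, Complex.exp_ofReal_mul_I_re]
    linarith [sin_le_cos_pi_div_two_sub hθ.le hθ' hsector]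
  · rw [hω, ← Complex.exp_add, ← add_mul, ← Complex.ofReal_add, Complex.neg_re,
      Complex.exp_ofReal_mul_I_re, ← Real.cos_pi_sub]
    have := sin_le_cos_pi_div_two_sub hθ.le hθ' ((abs_neg _).trans_le hsector)
    ring_nf at this ⊢
    linarith

/-! ### Entire functions of order less than one -/

namespace HasGrowthOrder

variable {f g : ℂ → ℂ} {ρ : ℝ}

lemma exists_nonneg (hf : HasGrowthOrder f ρ) :
    ∃ B : ℝ, 0 ≤ B ∧ ∀ z, ‖f z‖ ≤ Real.exp (B * (1 + ‖z‖) ^ ρ) := by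
  obtain ⟨B, hB⟩ := hf
  refine ⟨|B|, abs_nonneg B, fun z ↦ (hB z).trans ?_⟩
  gcongr
  exact le_abs_self B

lemma mul (hf : HasGrowthOrder f ρ) (hg : HasGrowthOrder g ρ) :
    HasGrowthOrder (fun z ↦ f z * g z) ρ := by
  obtain ⟨A, hA⟩ := hf
  obtain ⟨B, hB⟩ := hg
  refine ⟨A + B, fun z ↦ ?_⟩
  rw [norm_mul, add_mul, Real.exp_add]
  gcongr
  exacts [hA z, hB z]

lemma const (hρ : 0 ≤ ρ) (c : ℂ) : HasGrowthOrder (fun _ ↦ c) ρ := by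
  refine ⟨‖c‖, fun z ↦ ?_⟩
  have hone := Real.one_le_rpow (le_add_of_nonneg_right (norm_nonneg z)) hρ
  linarith [Real.add_one_le_exp (‖c‖ * (1 + ‖z‖) ^ ρ),
    le_mul_of_one_le_right (norm_nonneg c) hone]

lemma sub (hf : HasGrowthOrder f ρ) (hg : HasGrowthOrder g ρ) (hρ : 0 ≤ ρ) :
    HasGrowthOrder (fun z ↦ f z - g z) ρ := by
  obtain ⟨A, hA₀, hA⟩ := hf.exists_nonneg
  obtain ⟨B, hB₀, hB⟩ := hg.exists_nonneg
  refine ⟨A + B + 1, fun z ↦ (norm_sub_le _ _).trans ?_⟩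
  have hone := Real.one_le_rpow (le_add_of_nonneg_right (norm_nonneg z)) hρ
  set s := (1 + ‖z‖) ^ ρ
  calc ‖f z‖ + ‖g z‖ ≤ Real.exp ((A + B) * s) + Real.exp ((A + B) * s) := by
        gcongr
        · exact (hA z).trans (by gcongr; linarith)
        · exact (hB z).trans (by gcongr; linarith)
    _ ≤ Real.exp ((A + B) * s) * Real.exp s := by
        rw [← mul_two]
        gcongr
        linarith [Real.add_one_le_exp s]
    _ = Real.exp ((A + B + 1) * s) := by rw [← Real.exp_add, add_one_mul]

lemma comp_const_mul (hf : HasGrowthOrder f ρ) (hρ : 0 ≤ ρ) (a : ℂ) :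
    HasGrowthOrder (fun z ↦ f (a * z)) ρ := by
  obtain ⟨B, hB₀, hB⟩ := hf.exists_nonneg
  refine ⟨B * (1 + ‖a‖) ^ ρ, fun z ↦ (hB _).trans ?_⟩
  rw [mul_assoc, ← Real.mul_rpow (by positivity) (by positivity), norm_mul]
  gcongr
  nlinarith [norm_nonneg a, norm_nonneg z]

lemma of_eventually_le {B : ℝ} (hf : Continuous f) (hρ : 0 ≤ ρ)
    (hB : ∀ᶠ z in Bornology.cobounded ℂ, ‖f z‖ ≤ Real.exp (B * (1 + ‖z‖) ^ ρ)) :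
    HasGrowthOrder f ρ := by
  obtain ⟨R, -, hR⟩ := hasBasis_cobounded_norm.eventually_iff.1 hB
  obtain ⟨M, hM⟩ := (isCompact_closedBall (0 : ℂ) R).exists_bound_of_continuousOn hf.continuousOn
  refine ⟨|M| + |B|, fun z ↦ ?_⟩
  have hone := Real.one_le_rpow (le_add_of_nonneg_right (norm_nonneg z)) hρ
  rcases le_total ‖z‖ R with hz | hz
  · have hs := le_mul_of_one_le_right (add_nonneg (abs_nonneg M) (abs_nonneg B)) hone
    linarith [hM z (mem_closedBall_zero_iff.2 hz), le_abs_self M, abs_nonneg B,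
      Real.add_one_le_exp ((|M| + |B|) * (1 + ‖z‖) ^ ρ)]
  · refine (hR hz).trans ?_
    gcongr
    linarith [le_abs_self B, abs_nonneg M]

end HasGrowthOrder

lemma exists_eq_pow_mul {f : ℂ → ℂ} (hf : Differentiable ℂ f) (hne : f ≠ 0) (z₀ : ℂ) :
    ∃ (k : ℕ) (h : ℂ → ℂ), Differentiable ℂ h ∧ h z₀ ≠ 0 ∧ ∀ z, f z = (z - z₀) ^ k * h z := by
  obtain ⟨p, hp⟩ := hf.analyticAt z₀
  have hp₀ : p ≠ 0 := fun h ↦ hne <| funext fun z ↦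
    AnalyticOnNhd.eqOn_zero_of_preconnected_of_eventuallyEq_zero (fun z _ ↦ hf.analyticAt z)
      isPreconnected_univ (mem_univ z₀) (hp.locally_zero_iff.2 h) (mem_univ z)
  refine ⟨p.order, _, ?_, hp.iterate_dslope_fslope_ne_zero hp₀,
    hp.eq_pow_order_mul_iterate_dslope⟩
  refine Function.Iterate.rec (Differentiable ℂ) hf (fun h hh ↦ ?_) p.order
  rw [← differentiableOn_univ] at hh ⊢
  exact (Complex.differentiableOn_dslope univ_mem).2 hh

lemma exists_eq_eval_mul (s : Finset ℂ) : ∀ {f : ℂ → ℂ}, Differentiable ℂ f → f ≠ 0 →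
    (∀ z, f z = 0 → z ∈ s) → ∃ (p : ℂ[X]) (h : ℂ → ℂ), p.Monic ∧ Differentiable ℂ h ∧
      (∀ z, h z ≠ 0) ∧ ∀ z, f z = p.eval z * h z := by
  induction s using Finset.induction_on with
  | empty =>
    intro f hf _ hs
    exact ⟨1, f, Polynomial.monic_one, hf, fun z hz ↦ by simpa using hs z hz, by simp⟩
  | insert a s _ ih =>
    intro f hf hne hs
    obtain ⟨k, h, hh, ha, hfh⟩ := exists_eq_pow_mul hf hne a
    obtain ⟨p, q, hp, hq, hq₀, hpq⟩ := ih hh (fun h₀ ↦ ha (congrFun h₀ a)) fun z hz ↦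
      (Finset.mem_insert.1 (hs z (by rw [hfh, hz, mul_zero]))).resolve_left fun h₀ ↦ ha (h₀ ▸ hz)
    refine ⟨(Polynomial.X - Polynomial.C a) ^ k * p, q,
      ((Polynomial.monic_X_sub_C a).pow k).mul hp, hq, hq₀, fun z ↦ ?_⟩
    rw [hfh, hpq, ← mul_assoc]
    simp only [Polynomial.eval_mul, Polynomial.eval_pow, Polynomial.eval_sub, Polynomial.eval_X,
      Polynomial.eval_C]

lemma exists_eq_mul_exp {h : ℂ → ℂ} (hh : Differentiable ℂ h) (h₀ : ∀ z, h z ≠ 0) :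
    ∃ L : ℂ → ℂ, Differentiable ℂ L ∧ L 0 = 0 ∧ ∀ z, h z = h 0 * Complex.exp (L z) := by
  have hd : Differentiable ℂ fun z ↦ deriv h z / h z := fun z ↦
    ((hh.analyticAt z).deriv.differentiableAt).div (hh z) (h₀ z)
  obtain ⟨L, hL₀, hL⟩ := hd.isExactOn_univ.with_val_at 0 0
  have hquot : ∀ z, HasDerivAt (fun z ↦ h z * Complex.exp (-L z)) 0 z := fun z ↦ by
    refine ((hh z).hasDerivAt.mul (hL z (mem_univ z)).neg.cexp).congr_deriv ?_
    rw [mul_neg, mul_neg, mul_left_comm, mul_div_cancel₀ _ (h₀ z)]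
    ring
  refine ⟨L, fun z ↦ (hL z (mem_univ z)).differentiableAt, hL₀, fun z ↦ ?_⟩
  have := is_const_of_deriv_eq_zero (fun z ↦ (hquot z).differentiableAt)
    (fun z ↦ (hquot z).deriv) z 0
  rw [hL₀, neg_zero, Complex.exp_zero, mul_one] at this
  rw [← this, mul_assoc, ← Complex.exp_add, neg_add_cancel, Complex.exp_zero, mul_one]

lemma eq_zero_of_re_le {L : ℂ → ℂ} (hL : Differentiable ℂ L) (hL₀ : L 0 = 0) {M : ℝ → ℝ}
    (hM : MonotoneOn M (Ici 0)) (hMo : M =o[atTop] (id : ℝ → ℝ)) (hre : ∀ z, (L z).re ≤ M ‖z‖)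
    (z : ℂ) : L z = 0 := by
  have hbound : ∀ R, ‖z‖ < R → ‖L z‖ ≤ 2 * (|M R| + 1) * ‖z‖ / (R - ‖z‖) := fun R hR ↦ by
    have hR₀ : 0 < R := (norm_nonneg z).trans_lt hR
    refine Complex.borelCaratheodory_zero (by positivity) hL.differentiableOn (fun w hw ↦ ?_) hR₀
      (mem_ball_zero_iff.2 hR) hL₀
    have hw' : M ‖w‖ ≤ M R := hM (norm_nonneg w) hR₀.le (mem_ball_zero_iff.1 hw).le
    exact (hre w).trans (by linarith [le_abs_self (M R)])
  have hnum : (fun R ↦ 2 * (|M R| + 1) * ‖z‖) =o[atTop] (id : ℝ → ℝ) := by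
    have := ((hMo.norm_left.add (isLittleO_const_id_atTop 1)).const_mul_left (2 * ‖z‖))
    exact this.congr_left fun R ↦ by rw [Real.norm_eq_abs]; ring
  have hden : (fun R : ℝ ↦ R - ‖z‖) ~[atTop] id :=
    IsEquivalent.refl.sub_isLittleO (isLittleO_const_id_atTop ‖z‖)
  exact norm_le_zero_iff.1 <| ge_of_tendsto
    (hnum.trans_isBigO hden.isBigO_symm).tendsto_div_nhds_zero
    ((eventually_gt_atTop ‖z‖).mono hbound)

lemma isLittleO_rpow_id_atTop {ρ : ℝ} (hρ : ρ < 1) :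
    (fun x : ℝ ↦ x ^ ρ) =o[atTop] (id : ℝ → ℝ) := by
  refine isLittleO_of_tendsto' ((eventually_ne_atTop 0).mono fun x hx h ↦ (hx h).elim) ?_
  refine (tendsto_rpow_neg_atTop (sub_pos.2 hρ)).congr' ?_
  filter_upwards [eventually_gt_atTop 0] with x hx
  rw [neg_sub, Real.rpow_sub_one hx.ne', id]

namespace HasGrowthOrder

variable {f : ℂ → ℂ} {ρ : ℝ}

lemma apply_eq_apply_zero (hf : HasGrowthOrder f ρ) (hρ₀ : 0 ≤ ρ) (hρ : ρ < 1)
    (hd : Differentiable ℂ f) (h₀ : ∀ z, f z ≠ 0) (z : ℂ) : f z = f 0 := by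
  obtain ⟨B, hB₀, hB⟩ := hf.exists_nonneg
  obtain ⟨L, hL, hL₀, hexp⟩ := exists_eq_mul_exp hd h₀
  have hmono : MonotoneOn (fun R ↦ B * (1 + R) ^ ρ - Real.log ‖f 0‖) (Ici 0) := by
    intro R hR S _ hRS
    have := mem_Ici.1 hR
    dsimp only
    gcongr
  have hlittle : (fun R ↦ B * (1 + R) ^ ρ - Real.log ‖f 0‖) =o[atTop] (id : ℝ → ℝ) := by
    have hshift : (fun R : ℝ ↦ 1 + R) ~[atTop] id := by
      simpa only [add_comm (1 : ℝ)] using!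
        IsEquivalent.refl.add_isLittleO (isLittleO_const_id_atTop (1 : ℝ))
    have hpow := (isLittleO_rpow_id_atTop hρ).comp_tendsto
      (tendsto_atTop_add_const_left _ (1 : ℝ) tendsto_id)
    exact ((hpow.trans_isBigO hshift.isBigO).const_mul_left B).sub (isLittleO_const_id_atTop _)
  have hre : ∀ z, (L z).re ≤ B * (1 + ‖z‖) ^ ρ - Real.log ‖f 0‖ := fun z ↦ by
    have hlog := Real.log_le_log (norm_pos_iff.2 (h₀ z)) (hB z)
    rw [hexp z, norm_mul, Complex.norm_exp, Real.log_mul (norm_ne_zero_iff.2 (h₀ 0))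
      (Real.exp_ne_zero _), Real.log_exp, Real.log_exp] at hlog
    linarith
  rw [hexp z, eq_zero_of_re_le hL hL₀ hmono hlittle hre z, Complex.exp_zero, mul_one]

theorem exists_eq_eval (hf : HasGrowthOrder f ρ) (hρ₀ : 0 ≤ ρ) (hρ : ρ < 1)
    (hd : Differentiable ℂ f) (hne : f ≠ 0) (hfin : {z | f z = 0}.Finite) :
    ∃ p : ℂ[X], f = fun z ↦ p.eval z := by
  obtain ⟨B, hB⟩ := hf
  obtain ⟨p, h, hp, hh, hh₀, hph⟩ := exists_eq_eval_mul hfin.toFinset hd hne fun z hz ↦ by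
    simpa using hz
  have hp₁ : ∀ᶠ z in Bornology.cobounded ℂ, 1 ≤ ‖p.eval z‖ := by
    rcases lt_or_ge 0 p.degree with hdeg | hdeg
    · exact (p.tendsto_norm_atTop hdeg tendsto_norm_cobounded_atTop).eventually_ge_atTop 1
    · simp [hp.degree_le_zero_iff_eq_one.1 hdeg]
  have hgrowth : HasGrowthOrder h ρ := .of_eventually_le hh.continuous hρ₀ <| hp₁.mono fun z hz ↦
    (le_mul_of_one_le_left (norm_nonneg _) hz).trans (by rw [← norm_mul, ← hph]; exact hB z)
  refine ⟨p * Polynomial.C (h 0), funext fun z ↦ ?_⟩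
  rw [hph, hgrowth.apply_eq_apply_zero hρ₀ hρ hh hh₀, Polynomial.eval_mul, Polynomial.eval_C]

end HasGrowthOrder

/-! ### Decay in a sector -/

lemma mem_negSector {β : ℝ} {z : ℂ} : z ∈ negSector β ↔ |Complex.arg (-z)| ≤ β := Iff.rfl

lemma neg_exp_mem_negSector {β : ℝ} (hβ : β < Real.pi) {w : ℂ} (hw : |w.im| ≤ β) :
    -Complex.exp w ∈ negSector β := by
  obtain ⟨h₁, h₂⟩ := abs_le.1 hw
  rw [mem_negSector, neg_neg, ← Complex.log_im,
    Complex.log_exp (by linarith) (by linarith)]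
  exact hw

lemma exists_neg_exp_eq_of_notMem_negSector {β : ℝ} (hβ : 0 ≤ β) {z : ℂ}
    (hz : z ∉ negSector β) :
    ∃ w : ℂ, β ≤ w.im ∧ w.im ≤ 2 * Real.pi - β ∧ -Complex.exp w = z := by
  have hz₀ : -z ≠ 0 := by
    rintro h
    rw [mem_negSector, h, Complex.arg_zero, abs_zero] at hz
    exact hz hβ
  rw [mem_negSector, not_le, lt_abs] at hz
  have harg := Complex.arg_le_pi (-z)
  have harg' := Complex.neg_pi_lt_arg (-z)
  rcases hz with hz | hz
  · exact ⟨Complex.log (-z), by rw [Complex.log_im]; exact hz.le, by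
      rw [Complex.log_im]; linarith, by rw [Complex.exp_log hz₀, neg_neg]⟩
  · have him : (Complex.log (-z) + 2 * Real.pi * Complex.I).im =
        Complex.arg (-z) + 2 * Real.pi := by simp [Complex.log_im]
    exact ⟨Complex.log (-z) + 2 * Real.pi * Complex.I, by rw [him]; linarith, by
      rw [him]; linarith, by rw [Complex.exp_periodic, Complex.exp_log hz₀, neg_neg]⟩

lemma neBot_cobounded_inf_negSector {β : ℝ} (hβ : 0 ≤ β) :
    (Bornology.cobounded ℂ ⊓ 𝓟 (negSector β)).NeBot := by
  have htop : Tendsto (fun s : ℝ ↦ -(s : ℂ)) atTop (Bornology.cobounded ℂ) := by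
    rw [← tendsto_norm_atTop_iff_cobounded]
    simpa using tendsto_abs_atTop_atTop
  refine (tendsto_inf.2 ⟨htop, tendsto_principal.2 ?_⟩).neBot
  filter_upwards [eventually_ge_atTop 0] with s hs
  rwa [mem_negSector, neg_neg, Complex.arg_ofReal_of_nonneg hs, abs_zero]

lemma exists_norm_le_of_tendsto_zero {E F : Type*} [SeminormedAddCommGroup E] [ProperSpace E]
    [SeminormedAddCommGroup F] {f : E → F} (hf : Continuous f) {s : Set E}
    (ht : Tendsto f (Bornology.cobounded E ⊓ 𝓟 s) (𝓝 0)) : ∃ C, ∀ z ∈ s, ‖f z‖ ≤ C := by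
  have hev := eventually_inf_principal.1 (ht.norm.eventually_le_const (u := 1) (by simp))
  obtain ⟨R, -, hR⟩ := hasBasis_cobounded_norm.eventually_iff.1 hev
  obtain ⟨M, hM⟩ := (isCompact_closedBall (0 : E) R).exists_bound_of_continuousOn hf.continuousOn
  refine ⟨max M 1, fun z hz ↦ ?_⟩
  rcases le_total ‖z‖ R with hzR | hzR
  · exact (hM z (mem_closedBall_zero_iff.2 hzR)).trans (le_max_left _ _)
  · exact (hR hzR hz).trans (le_max_right _ _)

namespace HasGrowthOrder

variable {f : ℂ → ℂ} {ρ β : ℝ}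

lemma norm_comp_neg_exp_le (hf : HasGrowthOrder f ρ) (hρ : 0 ≤ ρ) :
    ∃ B : ℝ, ∀ w, ‖f (-Complex.exp w)‖ ≤ Real.exp (B * Real.exp (ρ * |w.re|)) := by
  obtain ⟨B, hB₀, hB⟩ := hf.exists_nonneg
  refine ⟨B * 2 ^ ρ, fun w ↦ (hB _).trans ?_⟩
  rw [norm_neg, Complex.norm_exp, mul_assoc, mul_comm ρ, Real.exp_mul |w.re|,
    ← Real.mul_rpow zero_le_two (Real.exp_pos _).le]
  gcongr
  linarith [Real.exp_le_exp.2 (le_abs_self w.re), Real.one_le_exp (abs_nonneg w.re)]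

/-- The complement of the sector has opening `2 (π - β)`, which is narrow enough for the
Phragmén-Lindelöf principle in order `ρ`. -/
lemma norm_le_of_forall_negSector (hf : HasGrowthOrder f ρ) (hρ : 0 ≤ ρ)
    (hd : Differentiable ℂ f) (hβ : 0 ≤ β) (hβ' : β < Real.pi)
    (hρβ : ρ < Real.pi / (2 * (Real.pi - β))) {C : ℝ} (hC : ∀ z ∈ negSector β, ‖f z‖ ≤ C) (z : ℂ) :
    ‖f z‖ ≤ C := by
  by_cases hz : z ∈ negSector β
  · exact hC z hz
  obtain ⟨w, hw, hw', rfl⟩ := exists_neg_exp_eq_of_notMem_negSector hβ hz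
  obtain ⟨B, hB⟩ := hf.norm_comp_neg_exp_le hρ
  refine PhragmenLindelof.horizontal_strip (f := fun w ↦ f (-Complex.exp w))
    (hd.comp Complex.differentiable_exp.neg).diffContOnCl ⟨ρ, ?_, B, ?_⟩ (fun v hv ↦ ?_)
    (fun v hv ↦ ?_) hw hw'
  · rwa [show 2 * Real.pi - β - β = 2 * (Real.pi - β) by ring]
  · exact IsBigO.of_norm_le hB
  · exact hC _ (neg_exp_mem_negSector hβ' (by rw [hv, abs_of_nonneg hβ]))
  · rw [← Complex.exp_periodic.sub_eq v]
    refine hC _ (neg_exp_mem_negSector hβ' (abs_le.2 ?_))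
    have him : (v - 2 * Real.pi * Complex.I).im = v.im - 2 * Real.pi := by simp
    constructor <;> linarith

theorem eq_zero_of_tendsto_zero (hf : HasGrowthOrder f ρ) (hρ : 0 ≤ ρ)
    (hd : Differentiable ℂ f) (hβ : 0 ≤ β) (hβ' : β < Real.pi)
    (hρβ : ρ < Real.pi / (2 * (Real.pi - β)))
    (ht : Tendsto f (Bornology.cobounded ℂ ⊓ 𝓟 (negSector β)) (𝓝 0)) : f = 0 := by
  obtain ⟨C, hC⟩ := exists_norm_le_of_tendsto_zero hd.continuous ht
  have hbdd : Bornology.IsBounded (range f) := isBounded_iff_forall_norm_le.2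
    ⟨C, forall_mem_range.2 (hf.norm_le_of_forall_negSector hρ hd hβ hβ' hρβ hC)⟩
  obtain ⟨c, rfl⟩ := hd.exists_eq_const_of_bounded hbdd
  have := neBot_cobounded_inf_negSector hβ
  rw [tendsto_nhds_unique tendsto_const_nhds ht]
  rfl

end HasGrowthOrder

lemma tendsto_exp_neg_sqrt_mul_norm_eval {c : ℝ} (hc : 0 < c) (p : ℂ[X]) :
    Tendsto (fun z ↦ Real.exp (-(c * √‖z‖)) * ‖p.eval z‖) (Bornology.cobounded ℂ) (𝓝 0) := by
  have hsqrt : Tendsto (fun z : ℂ ↦ √‖z‖) (Bornology.cobounded ℂ) atTop :=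
    Real.tendsto_sqrt_atTop.comp tendsto_norm_cobounded_atTop
  have hpow (n : ℕ) : Tendsto (fun z : ℂ ↦ √‖z‖ ^ n / Real.exp (c * √‖z‖))
      (Bornology.cobounded ℂ) (𝓝 0) :=
    (isLittleO_pow_exp_pos_mul_atTop n hc).tendsto_div_nhds_zero.comp hsqrt
  have hlim := ((hpow 0).add (hpow (2 * p.natDegree))).const_mul
    (∑ i ∈ Finset.range (p.natDegree + 1), ‖p.coeff i‖)
  rw [add_zero, mul_zero] at hlim
  refine squeeze_zero (fun z ↦ by positivity) (fun z ↦ ?_) hlim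
  rw [Real.exp_neg, inv_mul_eq_div, pow_zero, ← add_div, ← mul_div_assoc, pow_mul,
    Real.sq_sqrt (norm_nonneg z)]
  gcongr
  exact norm_eval_le le_rfl z

/-- If `D` had finitely many zeros it would be a polynomial, so `F` would decay in the sector and
hence vanish. -/
theorem HasGrowthOrder.infinite_setOf_eq_zero {F D : ℂ → ℂ} {ρ β c : ℝ} (hF : HasGrowthOrder F ρ)
    (hD : HasGrowthOrder D ρ) (hFd : Differentiable ℂ F) (hDd : Differentiable ℂ D)
    (hρ₀ : 0 ≤ ρ) (hρ : ρ < 1) (hβ : 0 ≤ β) (hβ' : β < Real.pi)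
    (hρβ : ρ < Real.pi / (2 * (Real.pi - β))) (hc : 0 < c) (hF₀ : F ≠ 0)
    (hFD : ∀ᶠ z in Bornology.cobounded ℂ ⊓ 𝓟 (negSector β),
      ‖F z‖ ≤ Real.exp (-(c * √‖z‖)) * ‖D z‖) (hD₀ : D ≠ 0) :
    {z | D z = 0}.Infinite := by
  intro hfin
  obtain ⟨p, rfl⟩ := hD.exists_eq_eval hρ₀ hρ hDd hD₀ hfin
  exact hF₀ <| hF.eq_zero_of_tendsto_zero hρ₀ hFd hβ hβ' hρβ <|
    squeeze_zero_norm' hFD ((tendsto_exp_neg_sqrt_mul_norm_eval hc p).mono_left inf_le_left)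

lemma not_accPt_setOf_eq_zero {f : ℂ → ℂ} (hf : Differentiable ℂ f) (hne : f ≠ 0) (z : ℂ) :
    ¬ AccPt z (𝓟 {z | f z = 0}) := fun hz ↦ hne <| funext fun w ↦
  AnalyticOnNhd.eqOn_zero_of_preconnected_of_frequently_eq_zero (fun z _ ↦ hf.analyticAt z)
    isPreconnected_univ (mem_univ z) (accPt_iff_frequently_nhdsNE.1 hz) (mem_univ w)

/-! ### The zeros of the spectral determinant -/

lemma rayDirection_angle_bounds {m : ℕ} (hm : 3 ≤ m) :
    0 < 2 * Real.pi / ((m : ℝ) + 2) ∧ 2 * Real.pi / ((m : ℝ) + 2) ≤ Real.pi / 2 ∧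
      3 * (2 * Real.pi / ((m : ℝ) + 2)) / 2 < Real.pi ∧ 1 / 2 + (m : ℝ)⁻¹ < 1 ∧
      1 / 2 + (m : ℝ)⁻¹ <
        Real.pi / (2 * (Real.pi - 3 * (2 * Real.pi / ((m : ℝ) + 2)) / 2)) := by
  have hm' : (3 : ℝ) ≤ m := by exact_mod_cast hm
  have hπ := Real.pi_pos
  have hangle : 2 * (Real.pi - 3 * (2 * Real.pi / ((m : ℝ) + 2)) / 2) =
      2 * Real.pi * (m - 1) / (m + 2) := by
    field_simp
    ring
  refine ⟨by positivity, ?_, ?_, ?_, ?_⟩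
  · rw [div_le_div_iff₀ (by positivity) two_pos]
    nlinarith
  · rw [show 3 * (2 * Real.pi / ((m : ℝ) + 2)) / 2 = 3 * Real.pi / (m + 2) by ring,
      div_lt_iff₀ (by positivity)]
    nlinarith
  · rw [← lt_sub_iff_add_lt', inv_lt_comm₀ (by positivity) (by norm_num)]
    linarith
  · rw [hangle, show 1 / 2 + (m : ℝ)⁻¹ = (m + 2) / (2 * m) by field_simp,
      show Real.pi / (2 * Real.pi * (m - 1) / (m + 2)) = ((m : ℝ) + 2) / (2 * (m - 1)) by
        field_simp]
    exact div_lt_div_of_pos_left (by positivity) (by linarith) (by linarith)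

namespace IsSubdominantFamily

variable {Q₁ Q₂ : ℂ[X]} {g₁ g₂ : ℂ → ℂ → ℂ} {m : ℕ}

lemma hasGrowthOrder_spectralDet (h₁ : IsSubdominantFamily Q₁ g₁)
    (h₂ : IsSubdominantFamily Q₂ g₂) (hd₁ : Q₁.natDegree = m) (hd₂ : Q₂.natDegree = m) (ω : ℂ) :
    HasGrowthOrder (spectralDet ω g₁ g₂) (1 / 2 + (m : ℝ)⁻¹) := by
  have hρ : 0 ≤ 1 / 2 + (m : ℝ)⁻¹ := by positivity
  have value₁ := h₁.growth 0 (left_mem_Icc.2 zero_le_one)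
  have slope₁ := h₁.growth_deriv 0 (left_mem_Icc.2 zero_le_one)
  have value₂ := h₂.growth 0 (left_mem_Icc.2 zero_le_one)
  have slope₂ := h₂.growth_deriv 0 (left_mem_Icc.2 zero_le_one)
  rw [hd₁] at value₁ slope₁
  rw [hd₂] at value₂ slope₂
  simp only [Complex.ofReal_zero] at value₁ slope₁ value₂ slope₂
  rw [show spectralDet ω g₁ g₂ = fun lam ↦ _ from
    funext fun lam ↦ wronskian_comp_mul_zero _ _ _ _]
  exact ((value₁.comp_const_mul hρ _).mul
      ((HasGrowthOrder.const hρ ω).mul (slope₂.comp_const_mul hρ _))).sub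
    (((HasGrowthOrder.const hρ ω⁻¹).mul (slope₁.comp_const_mul hρ _)).mul
      (value₂.comp_const_mul hρ _)) hρ

theorem spectralDet_ne_zero_and_infinite (h₁ : IsSubdominantFamily Q₁ g₁)
    (h₂ : IsSubdominantFamily Q₂ g₂) (hQ₁ : Q₁.Monic) (hQ₂ : Q₂.Monic) (hd₁ : Q₁.natDegree = m)
    (hd₂ : Q₂.natDegree = m) (hm : 3 ≤ m) :
    spectralDet (rayDirection m) g₁ g₂ ≠ 0 ∧
      {lam | spectralDet (rayDirection m) g₁ g₂ lam = 0}.Infinite := by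
  obtain ⟨hθ, hθ', hβ, hρ, hρβ⟩ := rayDirection_angle_bounds hm
  obtain ⟨c, hc, hev⟩ := h₁.exists_eventually_norm_mul_le h₂ hQ₁ hQ₂ (by omega) (by omega) hθ hθ'
    (rfl : rayDirection m = _)
  have := neBot_cobounded_inf_negSector (β := 3 * (2 * Real.pi / ((m : ℝ) + 2)) / 2) (by positivity)
  obtain ⟨z, hz, hzle⟩ := hev.exists
  have hD₀ : spectralDet (rayDirection m) g₁ g₂ ≠ 0 := fun h ↦
    hz (norm_le_zero_iff.1 (by simpa [h] using hzle))
  have hρ₀ : 0 ≤ 1 / 2 + (m : ℝ)⁻¹ := by positivity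
  have growth₁ := h₁.growth 1 (right_mem_Icc.2 zero_le_one)
  have growth₂ := h₂.growth 1 (right_mem_Icc.2 zero_le_one)
  rw [hd₁] at growth₁
  rw [hd₂] at growth₂
  simp only [Complex.ofReal_one] at growth₁ growth₂
  exact ⟨hD₀, ((growth₁.comp_const_mul hρ₀ _).mul
      (growth₂.comp_const_mul hρ₀ _)).infinite_setOf_eq_zero
    (h₁.hasGrowthOrder_spectralDet h₂ hd₁ hd₂ _)
    ((differentiable_comp_const_mul (h₁.differentiable_param 1) _).mul
      (differentiable_comp_const_mul (h₂.differentiable_param 1) _))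
    (h₁.differentiable_spectralDet h₂ _) hρ₀ hρ (by positivity) hβ hρβ (mul_pos two_pos hc)
    (fun h ↦ hz (congrFun h z)) (hev.mono fun z hz ↦ hz.2) hD₀⟩

end IsSubdominantFamily

theorem infinite_and_not_accPt_isRayEigenvalue {Q : ℂ[X]} (hQ : Q.Monic) (hm : 3 ≤ Q.natDegree) :
    {lam | IsRayEigenvalue Q (rayDirection Q.natDegree) lam}.Infinite ∧
      ∀ z, ¬ AccPt z (𝓟 {lam | IsRayEigenvalue Q (rayDirection Q.natDegree) lam}) := by
  have hω := rayDirection_pow Q.natDegree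
  set ω := rayDirection Q.natDegree
  have hω' : ω⁻¹ ^ (Q.natDegree + 2) = 1 := by rw [inv_pow, hω, inv_one]
  have hω₀ : ω ≠ 0 := Complex.exp_ne_zero _
  have hQ₁ := monic_rotatedPoly hQ hω
  have hQ₂ := monic_rotatedPoly hQ hω'
  have hd₁ := natDegree_rotatedPoly Q hω₀
  have hd₂ := natDegree_rotatedPoly Q (inv_ne_zero hω₀)
  obtain ⟨g₁, h₁⟩ := exists_isSubdominantFamily hQ₁ (by rwa [hd₁])
  obtain ⟨g₂, h₂⟩ := exists_isSubdominantFamily hQ₂ (by rwa [hd₂])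
  simp only [← h₁.spectralDet_eq_zero_iff h₂ hQ (by omega) hω]
  obtain ⟨hne, hinf⟩ := h₁.spectralDet_ne_zero_and_infinite h₂ hQ₁ hQ₂ hd₁ hd₂ hm
  exact ⟨hinf, not_accPt_setOf_eq_zero (h₁.differentiable_spectralDet h₂ ω) hne⟩

/-- The set of eigenvalues of `H(m,a)` is infinite and discrete (no accumulation
point in `ℂ`). -/
theorem stmt3 (m : ℕ) (hm : 3 ≤ m) (a : ℕ → ℂ) :
    {lam : ℂ | IsEigenvalue m a lam}.Infinite ∧
    ∀ z : ℂ, ¬ AccPt z (Filter.principal {lam : ℂ | IsEigenvalue m a lam}) := by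
  have h := infinite_and_not_accPt_isRayEigenvalue (monic_potentialPoly m a)
    (by rwa [natDegree_potentialPoly])
  simpa only [natDegree_potentialPoly, ← isEigenvalue_iff_isRayEigenvalue] using h
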